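/- arXiv:2507.16730 — 2 statements merged into one kernel-verified Lean document; each statement's English description precedes it below -/
import Mathlib

section
/- There exist two non-isomorphic cographs on 15 vertices that are generalized cospectral; moreover, 15 is minimal: for every n < 15, any two cographs on n vertices that are generalized cospectral are isomorphic. -/
open SimpleGraph

/-- The characteristic polynomial (over `ℝ`) of the adjacency matrix of a finite graph. -/
noncomputable def adjCharPoly {V : Type} [Fintype V] [DecidableEq V] (G : SimpleGraph V) :
    Polynomial ℝ :=
  letI := Classical.decRel G.Adj
  Matrix.charpoly (G.adjMatrix ℝ)

/-- Two finite graphs are cospectral if their adjacency matrices have the same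
characteristic polynomial. -/
def Cospectral {V W : Type} [Fintype V] [DecidableEq V] [Fintype W] [DecidableEq W]
    (G : SimpleGraph V) (H : SimpleGraph W) : Prop :=
  adjCharPoly G = adjCharPoly H

/-- Generalized cospectrality: the graphs are cospectral and so are their complements. -/
def GenCospectral {V W : Type} [Fintype V] [DecidableEq V] [Fintype W] [DecidableEq W]
    (G : SimpleGraph V) (H : SimpleGraph W) : Prop :=
  Cospectral G H ∧ Cospectral Gᶜ Hᶜ

/-- A cograph is a graph with no induced path `P₄` (on 4 vertices). -/
def IsCograph {V : Type} (G : SimpleGraph V) : Prop :=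
  ¬ ∃ f : Fin 4 ↪ V, ∀ i j, G.Adj (f i) (f j) ↔ (SimpleGraph.pathGraph 4).Adj i j

/-- The number of isomorphism classes of graphs on `n` vertices satisfying an
isomorphism-invariant property `P`. -/
noncomputable def classCount (n : ℕ) (P : SimpleGraph (Fin n) → Prop) : ℕ :=
  Nat.card (Quot fun G H : {G : SimpleGraph (Fin n) // P G} => Nonempty (G.1 ≃g H.1))

namespace Cg

/-- Packing of the first `N` values of `f` into slots of width `w`. -/
def V (w N : ℕ) (f : ℕ → ℕ) : ℕ := ∑ i ∈ Finset.range N, f i * 2 ^ (w * i)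

/-- The `i`-th slot of width `w`. -/
def slot (w X i : ℕ) : ℕ := X / 2 ^ (w * i) % 2 ^ w

theorem V_succ' (w N : ℕ) (f : ℕ → ℕ) :
    V w (N + 1) f = f 0 + 2 ^ w * V w N (fun i => f (i + 1)) := by
  unfold V
  rw [Finset.sum_range_succ', Finset.mul_sum, add_comm]
  congr 1
  · simp
  · refine Finset.sum_congr rfl fun i _ => ?_
    rw [mul_add, pow_add]; ring

theorem V_lt (w N : ℕ) (f : ℕ → ℕ) (hf : ∀ i < N, f i < 2 ^ w) : V w N f < 2 ^ (w * N) := by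
  induction N generalizing f with
  | zero => simp [V]
  | succ n ih =>
    rw [V_succ']
    have h1 := ih (fun i => f (i + 1)) (fun i hi => hf _ (by omega))
    have h0 := hf 0 (by omega)
    have : 2 ^ (w * (n + 1)) = 2 ^ w * 2 ^ (w * n) := by rw [← pow_add]; ring_nf
    rw [this]
    nlinarith [Nat.mul_le_mul_left (2 ^ w) (Nat.succ_le_of_lt h1)]

theorem slot_succ (w x Y i : ℕ) (hx : x < 2 ^ w) : slot w (x + 2 ^ w * Y) (i + 1) = slot w Y i := by
  unfold slot
  have : 2 ^ (w * (i + 1)) = 2 ^ w * 2 ^ (w * i) := by rw [← pow_add]; ring_nf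
  rw [this, ← Nat.div_div_eq_div_mul, Nat.add_mul_div_left _ _ (by positivity),
    Nat.div_eq_of_lt hx, zero_add]

theorem slot_V (w N : ℕ) (f : ℕ → ℕ) (hf : ∀ i < N, f i < 2 ^ w) (i : ℕ) :
    slot w (V w N f) i = if i < N then f i else 0 := by
  induction N generalizing f i with
  | zero => simp [V, slot]
  | succ n ih =>
    rw [V_succ']
    have h0 := hf 0 (by omega)
    cases i with
    | zero => simp [slot, Nat.mod_eq_of_lt h0]
    | succ i =>
      rw [slot_succ _ _ _ _ h0, ih _ (fun i hi => hf _ (by omega))]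
      simp

theorem V_slot (w N X : ℕ) (hX : X < 2 ^ (w * N)) : V w N (slot w X) = X := by
  induction N generalizing X with
  | zero => simp at hX; simp [V, hX]
  | succ n ih =>
    rw [V_succ']
    have h2 : X = X % 2 ^ w + 2 ^ w * (X / 2 ^ w) := (Nat.mod_add_div _ _).symm
    have h3 : (fun i => slot w X (i + 1)) = slot w (X / 2 ^ w) := by
      funext i
      conv_lhs => rw [h2]
      exact slot_succ _ _ _ _ (Nat.mod_lt _ (by positivity))
    rw [h3, ih]
    · conv_rhs => rw [h2]
      simp [slot]
    · apply Nat.div_lt_of_lt_mul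
      rw [← pow_add]; convert hX using 2; ring

theorem slot_lt (w X i : ℕ) : slot w X i < 2 ^ w := Nat.mod_lt _ (by positivity)

theorem slot_and (w X Y i : ℕ) : slot w (X &&& Y) i = slot w X i &&& slot w Y i := by
  unfold slot
  apply Nat.eq_of_testBit_eq
  intro j
  simp only [← Nat.shiftRight_eq_div_pow, Nat.testBit_mod_two_pow, Nat.testBit_shiftRight,
    Nat.testBit_and]
  by_cases h : j < w <;> simp [h]

theorem slot_xor (w X Y i : ℕ) : slot w (X ^^^ Y) i = slot w X i ^^^ slot w Y i := by
  unfold slot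
  apply Nat.eq_of_testBit_eq
  intro j
  simp only [← Nat.shiftRight_eq_div_pow, Nat.testBit_mod_two_pow, Nat.testBit_shiftRight,
    Nat.testBit_xor]
  by_cases h : j < w <;> simp [h]

theorem V_congr {w N : ℕ} {f g : ℕ → ℕ} (h : ∀ i < N, f i = g i) : V w N f = V w N g :=
  Finset.sum_congr rfl fun i hi => by rw [h i (Finset.mem_range.1 hi)]

theorem V_and (w N : ℕ) (f g : ℕ → ℕ) (hf : ∀ i < N, f i < 2 ^ w) (hg : ∀ i < N, g i < 2 ^ w) :
    V w N f &&& V w N g = V w N (fun i => f i &&& g i) := by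
  have h : V w N f &&& V w N g < 2 ^ (w * N) :=
    lt_of_le_of_lt Nat.and_le_left (V_lt _ _ _ hf)
  rw [← V_slot w N _ h]
  apply V_congr
  intro i hi
  rw [slot_and, slot_V _ _ _ hf, slot_V _ _ _ hg]; simp [hi]

theorem V_add (w N : ℕ) (f g : ℕ → ℕ) : V w N f + V w N g = V w N (fun i => f i + g i) := by
  simp [V, add_mul, Finset.sum_add_distrib]

theorem V_sub (w N : ℕ) (f g : ℕ → ℕ) (h : ∀ i < N, g i ≤ f i) :
    V w N f - V w N g = V w N (fun i => f i - g i) := by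
  have : V w N (fun i => f i - g i) + V w N g = V w N f := by
    rw [V_add]; exact V_congr fun i hi => Nat.sub_add_cancel (h i hi)
  omega

theorem V_mul (w N c : ℕ) (f : ℕ → ℕ) : c * V w N f = V w N (fun i => c * f i) := by
  simp [V, Finset.mul_sum, mul_assoc]

theorem V_append (w n m : ℕ) (f : ℕ → ℕ) :
    V w (n + m) f = V w n f + 2 ^ (w * n) * V w m (fun i => f (n + i)) := by
  unfold V
  rw [Finset.sum_range_add, Finset.mul_sum]
  congr 1
  refine Finset.sum_congr rfl fun i _ => ?_
  rw [mul_add, pow_add]; ring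

theorem V_zero (w N : ℕ) (f : ℕ → ℕ) (h : ∀ i < N, f i = 0) : V w N f = 0 := by
  apply Finset.sum_eq_zero
  intro i hi; simp [h i (Finset.mem_range.1 hi)]

/-- right shift by `k` slots -/
theorem V_shr (w N k : ℕ) (f : ℕ → ℕ) (hf : ∀ i < N, f i < 2 ^ w) :
    V w N f >>> (w * k) = V w N (fun i => if i + k < N then f (i + k) else 0) := by
  have hlt : V w N f >>> (w * k) < 2 ^ (w * N) := by
    rw [Nat.shiftRight_eq_div_pow]
    exact lt_of_le_of_lt (Nat.div_le_self _ _) (V_lt _ _ _ hf)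
  rw [← V_slot w N _ hlt]
  apply V_congr
  intro i hi
  have := slot_V w N f hf (i + k)
  rw [← this]
  unfold slot
  rw [Nat.shiftRight_eq_div_pow, Nat.div_div_eq_div_mul, ← pow_add]
  congr 3; ring

/-- left shift by `k` slots -/
theorem V_shl (w N k : ℕ) (f : ℕ → ℕ) (hf : ∀ i < N, N ≤ i + k → f i = 0) :
    V w N f <<< (w * k) = V w N (fun i => if k ≤ i then f (i - k) else 0) := by
  rw [Nat.shiftLeft_eq]
  by_cases hk : k ≤ N
  · obtain ⟨m, rfl⟩ := Nat.exists_eq_add_of_le hk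
    rw [V_append w k m (fun i => if k ≤ i then f (i - k) else 0), V_zero w k, zero_add,
      add_comm k m, V_append w m k f, V_zero w k (fun i => f (m + i)), mul_zero, add_zero, mul_comm]
    · congr 1
      apply V_congr; intro i _; simp
    · intro i hi; exact hf _ (by omega) (by omega)
    · intro i hi; simp; omega
  · rw [V_zero, V_zero, zero_mul]
    · intro i hi; simp; omega
    · intro i hi; exact hf _ (by omega) (by omega)

/-- compare-exchange step -/
def cs (N G X k M : ℕ) : ℕ :=
  let M := M &&& (G &&& ((1 <<< (34 * (N - k))) - 1))
  bif Nat.beq (M &&& (M <<< (34 * k))) 0 then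
    let D := (X + G) - X >>> (34 * k)
    let Mg := D &&& M
    let S := D &&& (Mg - Mg >>> 33)
    (X - S) + S <<< (34 * k)
  else 0

theorem and_pow33 (x : ℕ) (hx : x < 2 ^ 34) : x &&& 2 ^ 33 = if 2 ^ 33 ≤ x then 2 ^ 33 else 0 := by
  rw [Nat.and_two_pow]
  have : x.testBit 33 = decide (2 ^ 33 ≤ x) := by
    rw [Nat.testBit_eq_decide_div_mod_eq]
    congr 1
    simp only [eq_iff_iff]
    omega
  rw [this]
  split_ifs with h
  · rw [decide_eq_true h]; simp
  · rw [decide_eq_false h]; simp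

/-- `X` is a good packing of `f` -/
def Good (N X : ℕ) (f : ℕ → ℕ) : Prop := X = V 34 N f ∧ ∀ i < N, f i < 2 ^ 33

theorem cs_spec (N G X k M : ℕ) (hk : 0 < k) (f : ℕ → ℕ) (hG : G = V 34 N (fun _ => 2 ^ 33))
    (hX : Good N X f) :
    ∃ f', Good N (cs N G X k M) f' ∧
      (Set.InjOn f' (Set.Iio N) → Set.InjOn f (Set.Iio N) ∨ N ≤ 1) := by
  obtain ⟨hX, hf⟩ := hX
  have hf4 : ∀ i < N, f i < 2 ^ 34 := fun i hi => (hf i hi).trans (by norm_num)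
  unfold cs
  extract_lets M' D Mg S
  cases hb : Nat.beq (M' &&& (M' <<< (34 * k))) 0 with
  | false =>
    refine ⟨fun _ => 0, ⟨?_, ?_⟩, ?_⟩
    · simp [V]
    · simp
    · intro h
      right
      by_contra hN
      have := @h 0 (by simp; omega) 1 (by simp; omega) rfl
      omega
  | true =>
  simp only [cond_true]
  have hb := Nat.eq_of_beq_eq_true hb
  have hGl : ∀ i < N, (fun _ : ℕ => 2 ^ 33) i < 2 ^ 34 := fun i _ => by norm_num
  -- masks
  have hM'lt : M' < 2 ^ (34 * N) := by
    refine lt_of_le_of_lt Nat.and_le_right (lt_of_le_of_lt Nat.and_le_left ?_)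
    rw [hG]; exact V_lt _ _ _ hGl
  obtain ⟨m, hm1, hm2, hm3⟩ : ∃ m : ℕ → Bool, M' = V 34 N (fun i => if m i then 2 ^ 33 else 0) ∧
      (∀ i, N ≤ i + k → m i = false) ∧ (∀ i < N, m i = true → m (i + k) = false) := by
    have hs : ∀ i, slot 34 M' i =
        if i + k < N ∧ 2 ^ 33 ≤ slot 34 M i then 2 ^ 33 else 0 := by
      intro i
      simp only [M', slot_and, hG, slot_V _ _ _ hGl]
      have : slot 34 ((1 <<< (34 * (N - k))) - 1) i = if i < N - k then 2 ^ 34 - 1 else 0 := by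
        have h1 : (1 <<< (34 * (N - k))) - 1 = V 34 (N - k) (fun _ => 2 ^ 34 - 1) := by
          rw [Nat.one_shiftLeft]
          unfold V
          rw [← Finset.mul_sum]
          have := Nat.geomSum_eq (m := 2 ^ 34) (by norm_num) (N - k)
          simp only [pow_mul]
          rw [this, Nat.mul_div_cancel']
          have := Nat.sub_dvd_pow_sub_pow (2 ^ 34) 1 (N - k)
          simpa using this
        rw [h1, slot_V]
        intro i _; norm_num
      rw [this]
      by_cases h : i + k < N
      · have h1 : i < N := by omega
        have h2 : i < N - k := by omega
        simp only [h1, h2, h, if_true, true_and]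
        have h5 : (2:ℕ) ^ 33 &&& (2 ^ 34 - 1) = 2 ^ 33 := by decide
        rw [h5, and_pow33 _ (slot_lt _ _ _)]
      · have h2 : ¬ i < N - k := by omega
        simp [h2, h]
    refine ⟨fun i => decide (i + k < N ∧ 2 ^ 33 ≤ slot 34 M i), ?_, ?_, ?_⟩
    · rw [← V_slot 34 N M' hM'lt]
      apply V_congr
      intro i _
      simp only [hs, decide_eq_true_eq]
    · intro i hi; simp; omega
    · intro i hi h
      simp only [decide_eq_true_eq] at h
      have h1 : slot 34 (M' &&& (M' <<< (34 * k))) (i + k) = 0 := by rw [hb]; simp [slot]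
      rw [slot_and] at h1
      have h2 : slot 34 (M' <<< (34 * k)) (i + k) = slot 34 M' i := by
        unfold slot
        rw [Nat.shiftLeft_eq, mul_add 34 i k, add_comm (34 * i), pow_add,
          ← Nat.div_div_eq_div_mul, Nat.mul_div_cancel _ (by positivity)]
      rw [h2, hs i, hs (i + k), if_pos h] at h1
      simp only [decide_eq_false_iff_not]
      intro h3
      rw [if_pos h3] at h1
      simp at h1
  -- D
  set g : ℕ → ℕ := fun i => if i + k < N then f (i + k) else 0 with hg
  have hgl : ∀ i, g i < 2 ^ 33 := by
    intro i; simp only [hg]; split_ifs with h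
    · exact hf _ h
    · norm_num
  have hD : D = V 34 N (fun i => f i + 2 ^ 33 - g i) := by
    simp only [D, hX, hG, V_add]
    rw [V_shr _ _ _ _ hf4, V_sub]
    intro i _
    have := hgl i
    simp only [hg] at this
    omega
  have hDl : ∀ i < N, f i + 2 ^ 33 - g i < 2 ^ 34 := by
    intro i hi
    have := hf i hi
    omega
  have hml : ∀ i < N, (fun i => if m i then 2 ^ 33 else 0) i < 2 ^ 34 := by
    intro i _; dsimp only; split_ifs <;> norm_num
  have hMg : Mg = V 34 N (fun i => if m i ∧ g i ≤ f i then 2 ^ 33 else 0) := by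
    simp only [Mg, hD, hm1]
    rw [V_and _ _ _ _ hDl hml]
    apply V_congr
    intro i hi
    by_cases h : m i
    · simp only [h, if_true, true_and]
      rw [and_pow33 _ (hDl i hi)]
      have := hgl i
      by_cases h' : g i ≤ f i
      · rw [if_pos h', if_pos (by omega)]
      · rw [if_neg h', if_neg (by omega)]
    · simp [h]
  have hMs : Mg >>> 33 = V 34 N (fun i => if m i ∧ g i ≤ f i then 1 else 0) := by
    have : Mg = V 34 N (fun i => if m i ∧ g i ≤ f i then 1 else 0) * 2 ^ 33 := by
      rw [hMg, mul_comm, V_mul]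
      apply V_congr; intro i _; split_ifs <;> simp
    rw [this, Nat.shiftRight_eq_div_pow, Nat.mul_div_cancel _ (by positivity)]
  have hMd : Mg - Mg >>> 33 = V 34 N (fun i => if m i ∧ g i ≤ f i then 2 ^ 33 - 1 else 0) := by
    rw [hMs, hMg, V_sub]
    · apply V_congr; intro i _; split_ifs <;> simp
    · intro i _; split_ifs <;> simp
  set s : ℕ → ℕ := fun i => if m i ∧ g i ≤ f i then f i - g i else 0 with hs
  have hS : S = V 34 N s := by
    simp only [S]
    rw [hMd, hD, V_and _ _ _ _ hDl]
    · apply V_congr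
      intro i hi
      dsimp only [s]
      split_ifs with h
      · rw [Nat.and_two_pow_sub_one_eq_mod]
        have := hf i hi
        omega
      · simp
    · intro i _; split_ifs <;> norm_num
  have hsle : ∀ i, s i ≤ f i := by
    intro i; simp only [hs]; split_ifs <;> omega
  have hs0 : ∀ i, m i = false → s i = 0 := by
    intro i hi; simp [hs, hi]
  have hshl : S <<< (34 * k) = V 34 N (fun i => if k ≤ i then s (i - k) else 0) := by
    rw [hS, V_shl]
    intro i _ h
    exact hs0 i (hm2 i h)
  -- result
  let f' : ℕ → ℕ := fun i => f i - s i + if k ≤ i then s (i - k) else 0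
  have hres : X - S + S <<< (34 * k) = V 34 N f' := by
    rw [hshl, hS, hX, V_sub _ _ _ _ (fun i _ => hsle i), V_add]
  -- description of f'
  let sel : ℕ → Prop := fun i => m i = true ∧ g i ≤ f i
  have hselN : ∀ i, sel i → i + k < N := by
    intro i h
    by_contra h'
    have := hm2 i (by omega)
    simp [sel, this] at h
  have A1 : ∀ i, sel i → f' i = f (i + k) := by
    intro i h
    have hi := hselN i h
    have h1 : s i = f i - f (i + k) := by
      simp only [hs]; rw [if_pos h]; simp [hg, hi]
    have h2 : f (i + k) ≤ f i := by have := h.2; simpa [hg, hi] using this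
    have h3 : (if k ≤ i then s (i - k) else 0) = 0 := by
      split_ifs with h3
      · apply hs0
        by_contra h4
        have := hm3 (i - k) (by omega) (by simpa using h4)
        rw [Nat.sub_add_cancel h3] at this
        simp [sel, this] at h
      · rfl
    simp only [f', h3, h1]; omega
  have A2 : ∀ i, sel i → f' (i + k) = f i := by
    intro i h
    have hi := hselN i h
    have h1 : s i = f i - f (i + k) := by
      simp only [hs]; rw [if_pos h]; simp [hg, hi]
    have h2 : f (i + k) ≤ f i := by have := h.2; simpa [hg, hi] using this
    have h3 : s (i + k) = 0 := hs0 _ (hm3 i (by omega) h.1)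
    simp only [f', h3, Nat.le_add_left, if_true, Nat.add_sub_cancel, h1]; omega
  have A3 : ∀ i, ¬ sel i → (∀ j, sel j → i ≠ j + k) → f' i = f i := by
    intro i h h'
    have h1 : s i = 0 := by simp only [hs]; rw [if_neg h]
    have h3 : (if k ≤ i then s (i - k) else 0) = 0 := by
      split_ifs with h3
      · by_contra h4
        refine h' (i - k) ?_ (by omega)
        by_contra h5
        apply h4
        simp only [hs]; rw [if_neg h5]
      · rfl
    simp [f', h1, h3]
  have A4 : ∀ i, sel i → ¬ sel (i + k) := by
    intro i h h2
    have := hm3 i (by have := hselN i h; omega) h.1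
    simp [sel, this] at h2
  classical
  let τ : ℕ → ℕ := fun i => if sel i then i + k else if k ≤ i ∧ sel (i - k) then i - k else i
  have hτ : ∀ i, f' (τ i) = f i := by
    intro i
    simp only [τ]
    split_ifs with h1 h2
    · exact A2 i h1
    · rw [A1 _ h2.2, Nat.sub_add_cancel h2.1]
    · apply A3 _ h1
      rintro j hj rfl
      exact h2 ⟨by omega, by simpa using hj⟩
  have hττ : ∀ i, τ (τ i) = i := by
    intro i
    by_cases h1 : sel i
    · have e1 : τ i = i + k := by simp only [τ]; rw [if_pos h1]
      rw [e1]
      simp only [τ]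
      rw [if_neg (A4 i h1), if_pos ⟨by omega, by simpa using h1⟩]; omega
    · by_cases h2 : k ≤ i ∧ sel (i - k)
      · have e1 : τ i = i - k := by simp only [τ]; rw [if_neg h1, if_pos h2]
        rw [e1]
        simp only [τ]
        rw [if_pos h2.2]; omega
      · have e1 : τ i = i := by simp only [τ]; rw [if_neg h1, if_neg h2]
        rw [e1, e1]
  have hτN : ∀ i < N, τ i < N := by
    intro i hi
    simp only [τ]
    split_ifs with h1 h2
    · exact hselN i h1
    · omega
    · exact hi
  refine ⟨f', ⟨hres, ?_⟩, ?_⟩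
  · intro i hi
    rw [← hττ i, hτ (τ i)]
    exact hf _ (hτN i hi)
  · intro h
    left
    intro i hi j hj hij
    rw [← hτ i, ← hτ j] at hij
    have := h (hτN i hi) (hτN j hj) hij
    rw [← hττ i, this, hττ]

def inner (N G : ℕ) (Zs : List ℕ) (X A : ℕ) : ℕ :=
  match Zs with
  | [] => X
  | z :: zs =>
    let A' := A &&& z
    inner N G zs (cs N G X (2 ^ zs.length) (z ^^^ A')) A'

def phase (N G X z : ℕ) (zs : List ℕ) : ℕ :=
  inner N G zs (cs N G X (2 ^ zs.length) (G ^^^ z)) z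

def phases (N G : ℕ) : List ℕ → ℕ → ℕ
  | [], X => X
  | z :: zs, X => phase N G (phases N G zs X) z zs

def sorted (N G X : ℕ) : Bool := Nat.beq (((X + G) - X >>> 34) &&& G) (1 <<< (33 + 34 * (N - 1)))

theorem inner_spec (N G : ℕ) (Zs : List ℕ) (X A : ℕ) (f : ℕ → ℕ)
    (hG : G = V 34 N (fun _ => 2 ^ 33)) (hX : Good N X f) :
    ∃ f', Good N (inner N G Zs X A) f' ∧
      (Set.InjOn f' (Set.Iio N) → Set.InjOn f (Set.Iio N) ∨ N ≤ 1) := by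
  induction Zs generalizing X A f with
  | nil => exact ⟨f, hX, fun h => Or.inl h⟩
  | cons z zs ih =>
    obtain ⟨f1, h1, h2⟩ := cs_spec N G X (2 ^ zs.length) (z ^^^ (A &&& z)) (by positivity) f hG hX
    obtain ⟨f2, h3, h4⟩ := ih _ (A &&& z) f1 h1
    refine ⟨f2, h3, fun h => ?_⟩
    rcases h4 h with h | h
    · exact h2 h
    · exact Or.inr h

theorem phases_spec (N G : ℕ) (Zs : List ℕ) (X : ℕ) (f : ℕ → ℕ)
    (hG : G = V 34 N (fun _ => 2 ^ 33)) (hX : Good N X f) :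
    ∃ f', Good N (phases N G Zs X) f' ∧
      (Set.InjOn f' (Set.Iio N) → Set.InjOn f (Set.Iio N) ∨ N ≤ 1) := by
  induction Zs generalizing X f with
  | nil => exact ⟨f, hX, fun h => Or.inl h⟩
  | cons z zs ih =>
    obtain ⟨f0, h0, h0'⟩ := ih X f hX
    obtain ⟨f1, h1, h2⟩ := cs_spec N G _ (2 ^ zs.length) (G ^^^ z) (by positivity) f0 hG h0
    obtain ⟨f2, h3, h4⟩ := inner_spec N G zs _ z f1 hG h1
    refine ⟨f2, h3, fun h => ?_⟩
    rcases h4 h with h | h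
    · rcases h2 h with h | h
      · exact h0' h
      · exact Or.inr h
    · exact Or.inr h

theorem sorted_spec (N G X : ℕ) (f : ℕ → ℕ)
    (hG : G = V 34 N (fun _ => 2 ^ 33)) (hX : Good N X f) (h : sorted N G X = true) :
    Set.InjOn f (Set.Iio N) := by
  obtain ⟨hX, hf⟩ := hX
  have hf4 : ∀ i < N, f i < 2 ^ 34 := fun i hi => (hf i hi).trans (by norm_num)
  have h := Nat.eq_of_beq_eq_true h
  have hGl : ∀ i < N, (fun _ : ℕ => 2 ^ 33) i < 2 ^ 34 := fun i _ => by norm_num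
  have hstep : ∀ i, i + 1 < N → f i < f (i + 1) := by
    intro i hi
    by_contra hle
    have e := V_shr 34 N 1 f hf4
    rw [mul_one] at e
    have hgl : ∀ i, (if i + 1 < N then f (i + 1) else 0) < 2 ^ 33 := by
      intro i; split_ifs with h
      · exact hf _ h
      · norm_num
    have h1 : slot 34 (((X + G) - X >>> 34) &&& G) i = 2 ^ 33 := by
      rw [hX, e, hG, V_add, V_sub, slot_and, slot_V, slot_V _ _ _ hGl, if_pos (by omega),
        if_pos hi, if_pos (by omega)]
      · rw [and_pow33, if_pos (by omega)]
        have := hf i (by omega)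
        omega
      · intro j hj
        have := hf j hj
        omega
      · intro j hj
        have := hgl j
        omega
    rw [h] at h1
    have h2 : slot 34 (1 <<< (33 + 34 * (N - 1))) i = 0 := by
      unfold slot
      rw [Nat.one_shiftLeft, Nat.pow_div _ (by norm_num)]
      · apply Nat.mod_eq_zero_of_dvd
        exact pow_dvd_pow _ (by omega)
      · omega
    rw [h2] at h1
    norm_num at h1
  have hmono : ∀ i j, i < j → j < N → f i < f j := by
    intro i j hij
    induction j, hij using Nat.le_induction with
    | base => intro hj; exact hstep i hj
    | succ j hj ih => intro hN; exact (ih (by omega)).trans (hstep j hN)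
  intro i hi j hj hij
  rcases lt_trichotomy i j with h | h | h
  · have := hmono i j h hj; omega
  · exact h
  · have := hmono j i h hi; omega

theorem sort_main (N G X : ℕ) (Zs : List ℕ) (f : ℕ → ℕ) (hN : 1 < N)
    (hG : G = V 34 N (fun _ => 2 ^ 33)) (hX : Good N X f)
    (h : sorted N G (phases N G Zs X) = true) :
    Set.InjOn f (Set.Iio N) := by
  obtain ⟨f', h1, h2⟩ := phases_spec N G Zs X f hG hX
  rcases h2 (sorted_spec N G _ f' hG h1 h) with h | h
  · exact h
  · omega

end Cg

namespace Cg

/-- Cotrees. -/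
inductive T
  | zero
  | one
  | un (l r : T)
  | co (t : T)

structure St where
  a : ℕ
  b : ℕ
  c : ℕ
  d : ℕ

def St.un (x y : St) : St :=
  ⟨x.a * y.a, x.a * y.b + x.b * y.a, x.c * y.c, x.c * y.d + x.d * y.c⟩

def St.co (x : St) : St := ⟨x.c - x.d, x.d, x.a + x.b, x.b⟩

def st (t : ℕ) : T → St
  | .zero => ⟨1, 0, 1, 0⟩
  | .one => ⟨t, 1, t + 1, 1⟩
  | .un l r => (st t l).un (st t r)
  | .co s => (st t s).co

def ov {B : Type} (op : B → B → B) (x : B) : Option B → B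
  | some y => op x y
  | none => x

/-- knapsack step -/
def go {B : Type} (op : B → B → B) (j : ℕ) : List B → List B → List B
  | acc, [] => acc.reverse
  | acc, x :: xs => go op j (ov op x acc[j]? :: acc) xs

def runG {B : Type} (op : T → B → B → B) (j : ℕ) (F : List B) (items : List T) : List B :=
  items.foldl (fun F C => go (op C) j [] F) F

def opT (C : T) (x y : List T) : List T := x ++ y.map (T.un C)

def connOf (j : ℕ) (F : List (List T)) : List T := (F.getD j []).map T.co

def F0 : List (List T) := [[.zero], [], [], [], [], [], [], []]
def F1 : List (List T) := runG opT 0 F0 [.one]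
def c2 : List T := connOf 2 F1
def F2 : List (List T) := runG opT 1 F1 c2
def c3 : List T := connOf 3 F2
def F3 : List (List T) := runG opT 2 F2 c3
def c4 : List T := connOf 4 F3
def F4 : List (List T) := runG opT 3 F3 c4
def c5 : List T := connOf 5 F4
def F5 : List (List T) := runG opT 4 F4 c5
def c6 : List T := connOf 6 F5
def F6 : List (List T) := runG opT 5 F5 c6
def c7 : List T := connOf 7 F6

def small (m : ℕ) : List T := F6.getD m []

/-- all items up to size 7 -/
def run7 {B : Type} (op : T → B → B → B) (F : List B) : List B :=
  runG op 6 (runG op 5 (runG op 4 (runG op 3 (runG op 2 (runG op 1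
    (runG op 0 F [.one]) c2) c3) c4) c5) c6) c7

def mapI {B : Type} (g : ℕ → B → B) : ℕ → List B → List B
  | _, [] => []
  | i, x :: xs => g i x :: mapI g (i + 1) xs

def bigx {B : Type} (op : T → B → B → B) (app : B → B → B) (E : B) (Cn F : B) (ys : List T) : B :=
  app F (ys.foldl (fun F y => op y F Cn) E)

def bigG {B : Type} (op : T → B → B → B) (app : B → B → B) (E : B) (co : B → B)
    (j : ℕ) (F : List B) : List B :=
  let Cn := co (F.getD j E)
  mapI (fun m P => bif Nat.ble m j then P else bigx op app E Cn P (small (m - j))) 0 F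

structure PV where
  n : ℕ
  a : ℕ
  b : ℕ
  c : ℕ
  d : ℕ

def PV.op (s : St) (P Q : PV) : PV :=
  ⟨P.n + Q.n, P.a + (s.a * Q.a) <<< (68 * P.n), P.b + (s.a * Q.b + s.b * Q.a) <<< (68 * P.n),
   P.c + (s.c * Q.c) <<< (68 * P.n), P.d + (s.c * Q.d + s.d * Q.c) <<< (68 * P.n)⟩
def PV.co (P : PV) : PV := ⟨P.n, P.c - P.d, P.d, P.a + P.b, P.b⟩
def PV.app (P Q : PV) : PV :=
  ⟨P.n + Q.n, P.a + Q.a <<< (68 * P.n), P.b + Q.b <<< (68 * P.n), P.c + Q.c <<< (68 * P.n),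
    P.d + Q.d <<< (68 * P.n)⟩
def PE : PV := ⟨0, 0, 0, 0, 0⟩

def opP (C : T) (P Q : PV) : PV := PV.op (st 17 C) P Q

def P7 : List PV :=
  run7 opP [⟨1, 1, 0, 1, 0⟩, PE, PE, PE, PE, PE, PE, PE, PE, PE, PE, PE, PE, PE, PE]
def P8 : List PV := bigG opP PV.app PE PV.co 8 P7
def P9 : List PV := bigG opP PV.app PE PV.co 9 P8
def P10 : List PV := bigG opP PV.app PE PV.co 10 P9
def P11 : List PV := bigG opP PV.app PE PV.co 11 P10
def P12 : List PV := bigG opP PV.app PE PV.co 12 P11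
def P13 : List PV := bigG opP PV.app PE PV.co 13 P12
def FIN : PV := P13.getD 14 PE

/-- doubling: `2 ^ e` copies -/
def dbl : ℕ → ℕ → ℕ → ℕ
  | 0, x, _ => x
  | e + 1, x, len => dbl e (x + x <<< len) (2 * len)

def NN : ℕ := 218752
def MASK : ℕ := ((1 <<< (68 * 218751)) - 1) / (2 ^ 68 - 1) * (2 ^ 33 - 1)
def hashV (P : PV) : ℕ := ((P.a ^^^ (P.c - P.d)) >>> 6) &&& MASK
def fold (y : ℕ) : ℕ :=
  (y &&& (1 <<< (68 * 109376) - 1)) + (y >>> (68 * 109376)) <<< 34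
def GG : ℕ := ((1 <<< (34 * NN)) - 1) / (2 ^ 34 - 1) * 2 ^ 33
/-- guard bits at slots with bit `q` of index equal to `1` -/
def Z (q : ℕ) : ℕ :=
  (dbl (17 - q) ((dbl q (2 ^ 33) 34) <<< (34 * 2 ^ q)) (34 * 2 ^ (q + 1))) &&& GG
def Zl : List ℕ :=
  [Z 17, Z 16, Z 15, Z 14, Z 13, Z 12, Z 11, Z 10, Z 9, Z 8, Z 7, Z 6, Z 5, Z 4, Z 3, Z 2, Z 1, Z 0]

set_option maxRecDepth 100000 in
theorem big_check : (Nat.beq FIN.n 218751 &&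
    sorted NN GG (phases NN GG Zl (fold (hashV FIN)))) = true := by
  decide +kernel

end Cg

namespace Cg
open SimpleGraph

def vt : T → Type
  | .zero => Empty
  | .one => Unit
  | .un l r => vt l ⊕ vt r
  | .co s => vt s

def gr : (s : T) → SimpleGraph (vt s)
  | .zero => (⊥ : SimpleGraph Empty)
  | .one => (⊥ : SimpleGraph Unit)
  | .un l r => (gr l).sum (gr r)
  | .co s => (gr s)ᶜ

instance vtFin : (s : T) → Fintype (vt s)
  | .zero => inferInstanceAs (Fintype Empty)
  | .one => inferInstanceAs (Fintype Unit)
  | .un l r => letI := vtFin l; letI := vtFin r; inferInstanceAs (Fintype (vt l ⊕ vt r))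
  | .co s => vtFin s

instance vtDec : (s : T) → DecidableEq (vt s)
  | .zero => inferInstanceAs (DecidableEq Empty)
  | .one => inferInstanceAs (DecidableEq Unit)
  | .un l r => letI := vtDec l; letI := vtDec r; inferInstanceAs (DecidableEq (vt l ⊕ vt r))
  | .co s => vtDec s

def sz : T → ℕ
  | .zero => 0
  | .one => 1
  | .un l r => sz l + sz r
  | .co s => sz s

theorem card_vt (s : T) : Fintype.card (vt s) = sz s := by
  induction s with
  | zero => rfl
  | one => rfl
  | un l r hl hr =>
    have : Fintype.card (vt (.un l r)) = Fintype.card (vt l ⊕ vt r) := rfl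
    rw [this, Fintype.card_sum, hl, hr]; rfl
  | co s h => exact h

/-- isomorphism of two graphs (on possibly different types) -/
def Isom {V W : Type} (G : SimpleGraph V) (H : SimpleGraph W) : Prop := Nonempty (G ≃g H)

section
variable {V W U V' W' : Type} {G : SimpleGraph V} {H : SimpleGraph W} {K : SimpleGraph U}
  {G' : SimpleGraph V'} {H' : SimpleGraph W'}

theorem Isom.refl (G : SimpleGraph V) : Isom G G := ⟨SimpleGraph.Iso.refl⟩
theorem Isom.symm (h : Isom G H) : Isom H G := h.elim fun e => ⟨e.symm⟩
theorem Isom.trans (h : Isom G H) (h' : Isom H K) : Isom G K :=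
  h.elim fun e => h'.elim fun e' => ⟨e.trans e'⟩
theorem Isom.compl (h : Isom G H) : Isom Gᶜ Hᶜ := by
  obtain ⟨e⟩ := h
  refine ⟨⟨e.toEquiv, ?_⟩⟩
  intro a b
  have := e.map_adj_iff (v := a) (w := b)
  have h2 : e a = e b ↔ a = b := e.injective.eq_iff
  change (Hᶜ.Adj (e a) (e b)) ↔ _
  simp only [SimpleGraph.compl_adj, this, h2, ne_eq]
theorem Isom.sum (h : Isom G G') (h' : Isom H H') : Isom (G.sum H) (G'.sum H') :=
  h.elim fun e => h'.elim fun e' => ⟨SimpleGraph.Iso.sumCongr e e'⟩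
end

def unL (l : List T) : T := l.foldr T.un T.zero

def szL (l : List T) : ℕ := (l.map sz).sum

@[simp] theorem unL_nil : unL [] = .zero := rfl
@[simp] theorem unL_cons (x : T) (l : List T) : unL (x :: l) = .un x (unL l) := rfl
@[simp] theorem szL_nil : szL [] = 0 := rfl
@[simp] theorem szL_cons (x : T) (l : List T) : szL (x :: l) = sz x + szL l := by simp [szL]
theorem szL_append (l l' : List T) : szL (l ++ l') = szL l + szL l' := by simp [szL]
theorem szL_perm {l l' : List T} (h : l.Perm l') : szL l = szL l' := (h.map sz).sum_eq

theorem sz_unL (l : List T) : sz (unL l) = szL l := by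
  induction l with
  | nil => rfl
  | cons x l ih => simp [sz, ih]

theorem gr_un (l r : T) : gr (.un l r) = (gr l).sum (gr r) := rfl
theorem gr_co (s : T) : gr (.co s) = (gr s)ᶜ := rfl

theorem isom_un {a b a' b' : T} (h : Isom (gr a) (gr a')) (h' : Isom (gr b) (gr b')) :
    Isom (gr (.un a b)) (gr (.un a' b')) := Isom.sum h h'

theorem isom_comm (a b : T) : Isom (gr (.un a b)) (gr (.un b a)) :=
  ⟨SimpleGraph.Iso.sumComm⟩

theorem isom_assoc (a b c : T) : Isom (gr (.un (.un a b) c)) (gr (.un a (.un b c))) :=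
  ⟨SimpleGraph.Iso.sumAssoc⟩

theorem isom_zero_un (a : T) : Isom (gr (.un .zero a)) (gr a) := by
  refine ⟨⟨Equiv.emptySum Empty (vt a), ?_⟩⟩
  rintro (x | x) (y | y)
  · exact x.elim
  · exact x.elim
  · exact y.elim
  · exact Iff.rfl

theorem isom_unL_perm {l l' : List T} (h : l.Perm l') : Isom (gr (unL l)) (gr (unL l')) := by
  induction h with
  | nil => exact Isom.refl _
  | cons x _ ih => exact isom_un (Isom.refl _) ih
  | swap x y l =>
    exact ((isom_assoc _ _ _).symm.trans (isom_un (isom_comm _ _) (Isom.refl _))).trans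
      (isom_assoc _ _ _)
  | trans _ _ h1 h2 => exact h1.trans h2

theorem isom_unL_append (l l' : List T) :
    Isom (gr (unL (l ++ l'))) (gr (.un (unL l) (unL l'))) := by
  induction l with
  | nil => exact (isom_zero_un _).symm
  | cons x l ih => exact (isom_un (Isom.refl _) ih).trans (isom_assoc _ _ _).symm

/-! ### coverage of the enumeration -/

/-- all members of the `m`-th cell have size `m` -/
def Szd (F : List (List T)) : Prop := ∀ m, ∀ s ∈ F.getD m [], sz s = m

/-- every union of a list of items satisfying `P` of total size `m` is represented -/
def Cov (P : T → Prop) (F : List (List T)) (m : ℕ) : Prop :=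
  ∀ l : List T, (∀ x ∈ l, P x) → szL l = m → ∃ s ∈ F.getD m [], Isom (gr (unL l)) (gr s)

theorem go_spec {B : Type} (op : B → B → B) (j : ℕ) (acc xs : List B) :
    (go op j acc xs).length = acc.length + xs.length ∧
    (∀ m < acc.length, (go op j acc xs)[m]? = acc.reverse[m]?) ∧
    (∀ m, ∀ x, xs[m]? = some x → (go op j acc xs)[acc.length + m]? =
      some (if j + 1 ≤ acc.length + m then
        ov op x (go op j acc xs)[acc.length + m - (j + 1)]? else x)) := by
  induction xs generalizing acc with
  | nil => simp [go]
  | cons x xs ih =>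
    rw [go]
    set v := ov op x acc[j]? with hv
    obtain ⟨h1, h2, h3⟩ := ih (v :: acc)
    refine ⟨?_, ?_, ?_⟩
    · rw [h1]; simp; omega
    · intro m hm
      rw [h2 m (by simp; omega)]
      rw [List.reverse_cons, List.getElem?_append_left (by simpa using hm)]
    · intro m y hy
      cases m with
      | zero =>
        simp at hy; subst hy
        rw [h2 _ (by simp)]
        simp only [add_zero, List.reverse_cons]
        rw [List.getElem?_append_right (by simp)]
        simp only [List.length_reverse, Nat.sub_self, List.getElem?_cons_zero, hv]
        congr 1
        split_ifs with hj
        · rw [h2 _ (by simp), List.reverse_cons,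
            List.getElem?_append_left (by simp; omega), List.getElem?_reverse (by omega)]
          congr 2
          omega
        · rw [List.getElem?_eq_none (by omega)]; rfl
      | succ m =>
        have := h3 m y (by simpa using hy)
        simp only [List.length_cons] at this
        rw [show acc.length + (m + 1) = acc.length + 1 + m by ring]
        exact this

theorem goT_length (C : T) (j : ℕ) (F : List (List T)) : (go (opT C) j [] F).length = F.length := by
  rw [(go_spec _ _ _ _).1]; simp

theorem goT_getD (C : T) (j : ℕ) (F : List (List T)) (m : ℕ) (hm : m < F.length) :
    (go (opT C) j [] F).getD m [] =
      F.getD m [] ++ if j + 1 ≤ m then ((go (opT C) j [] F).getD (m - (j + 1)) []).map (T.un C)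
        else [] := by
  have h := (go_spec (opT C) j [] F).2.2 m (F[m]) (List.getElem?_eq_getElem hm)
  simp only [List.length_nil, zero_add] at h
  rw [List.getD_eq_getElem?_getD, h, List.getD_eq_getElem?_getD, List.getElem?_eq_getElem hm]
  simp only [Option.getD_some]
  split_ifs with hj
  · have hl : m - (j + 1) < (go (opT C) j [] F).length := by rw [goT_length]; omega
    rw [List.getElem?_eq_getElem hl, List.getD_eq_getElem _ _ hl]
    rfl
  · simp

theorem goT_szd {C : T} {j : ℕ} {F : List (List T)} (hC : sz C = j + 1) (hF : Szd F) :
    Szd (go (opT C) j [] F) := by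
  intro m
  induction m using Nat.strong_induction_on with
  | _ m ih =>
  intro s hs
  by_cases hm : m < F.length
  · rw [goT_getD _ _ _ _ hm, List.mem_append] at hs
    rcases hs with hs | hs
    · exact hF m s hs
    · split_ifs at hs with hj
      · obtain ⟨y, hy, rfl⟩ := List.mem_map.1 hs
        have := ih _ (by omega) y hy
        simp [sz, this, hC]; omega
      · simp at hs
  · rw [List.getD_eq_default _ _ (by rw [goT_length]; omega)] at hs
    simp at hs

theorem goT_cov {C : T} {j : ℕ} {F : List (List T)} {P : T → Prop} (hC : sz C = j + 1)
    (hF : ∀ m < F.length, Cov P F m) :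
    ∀ m < F.length, Cov (fun x => P x ∨ x = C) (go (opT C) j [] F) m := by
  intro m
  induction m using Nat.strong_induction_on with
  | _ m ih =>
  intro hm l hl hsz
  rw [goT_getD _ _ _ _ hm]
  by_cases hCl : C ∈ l
  · obtain ⟨l', hl'⟩ : ∃ l', l.Perm (C :: l') := by
      obtain ⟨a, b, rfl⟩ := List.append_of_mem hCl
      exact ⟨a ++ b, List.perm_middle⟩
    have h1 := szL_perm hl'
    rw [szL_cons, hC, hsz] at h1
    obtain ⟨s, hs, e⟩ := ih (m - (j + 1)) (by omega) (by omega) l'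
      (fun x hx => hl x (hl'.symm.subset (List.mem_cons_of_mem _ hx))) (by omega)
    refine ⟨.un C s, ?_, ?_⟩
    · rw [if_pos (by omega)]
      exact List.mem_append_right _ (List.mem_map_of_mem hs)
    · exact (isom_unL_perm hl').trans (isom_un (Isom.refl _) e)
  · obtain ⟨s, hs, e⟩ := hF m hm l (fun x hx => by
      rcases hl x hx with h | h
      · exact h
      · exact absurd (h ▸ hx) hCl) hsz
    exact ⟨s, List.mem_append_left _ hs, e⟩

theorem Cov.mono {P Q : T → Prop} {F : List (List T)} {m : ℕ} (h : Cov Q F m)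
    (hPQ : ∀ x, P x → Q x) : Cov P F m :=
  fun l hl hs => h l (fun x hx => hPQ x (hl x hx)) hs

/-- bundle of the invariants -/
structure Inv (P : T → Prop) (F : List (List T)) (n : ℕ) : Prop where
  len : F.length = n
  szd : Szd F
  cov : ∀ m < n, Cov P F m

theorem Inv.run {P : T → Prop} {F : List (List T)} {n j : ℕ} (h : Inv P F n) (items : List T)
    (hi : ∀ C ∈ items, sz C = j + 1) :
    Inv (fun x => P x ∨ x ∈ items) (runG opT j F items) n := by
  induction items generalizing F P with
  | nil => simpa [runG] using h
  | cons C items ih =>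
    have hC := hi C (by simp)
    have h1 : Inv (fun x => P x ∨ x = C) (go (opT C) j [] F) n :=
      ⟨by rw [goT_length, h.len], goT_szd hC h.szd, fun m hm => by
        have := goT_cov hC (fun m hm => h.cov m (h.len ▸ hm)) m (h.len.symm ▸ hm)
        exact this⟩
    have h2 := ih h1 (fun C hC => hi C (by simp [hC]))
    refine ⟨h2.len, h2.szd, fun m hm => (h2.cov m hm).mono ?_⟩
    intro x hx
    simpa [or_assoc] using hx

theorem Inv.conn {P : T → Prop} {F : List (List T)} {n : ℕ} (h : Inv P F n) (j : ℕ) :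
    ∀ C ∈ connOf j F, sz C = j := by
  intro C hC
  obtain ⟨s, hs, rfl⟩ := List.mem_map.1 hC
  exact h.szd j s hs

end Cg

namespace Cg

def F15 : List (List T) := [[.zero], [], [], [], [], [], [], [], [], [], [], [], [], [], []]

def bigT (j : ℕ) (F : List (List T)) : List (List T) :=
  bigG opT (fun x y => x ++ y) [] (List.map T.co) j F

def G7 : List (List T) := run7 opT F15
def G8 : List (List T) := bigT 8 G7
def G9 : List (List T) := bigT 9 G8
def G10 : List (List T) := bigT 10 G9
def G11 : List (List T) := bigT 11 G10
def G12 : List (List T) := bigT 12 G11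
def G13 : List (List T) := bigT 13 G12
def dl : List T := G13.getD 14 []

def connL : ℕ → List T
  | 1 => [.one]
  | 2 => c2
  | 3 => c3
  | 4 => c4
  | 5 => c5
  | 6 => c6
  | 7 => c7
  | 8 => connOf 8 G7
  | 9 => connOf 9 G8
  | 10 => connOf 10 G9
  | 11 => connOf 11 G10
  | 12 => connOf 12 G11
  | 13 => connOf 13 G12
  | _ => []

def It (k : ℕ) (x : T) : Prop := ∃ j ≤ k, x ∈ connL j

theorem It_zero (x : T) : ¬ It 0 x := by
  rintro ⟨j, hj, hx⟩
  obtain rfl : j = 0 := by omega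
  simp [connL] at hx

theorem It_succ {k : ℕ} {x : T} (h : It (k + 1) x) : It k x ∨ x ∈ connL (k + 1) := by
  obtain ⟨j, hj, hx⟩ := h
  rcases Nat.lt_or_ge k j with h | h
  · obtain rfl : j = k + 1 := by omega
    exact Or.inr hx
  · exact Or.inl ⟨j, h, hx⟩

theorem It.mono {k k' : ℕ} {x : T} (h : It k x) (hk : k ≤ k') : It k' x := by
  obtain ⟨j, hj, hx⟩ := h
  exact ⟨j, by omega, hx⟩

theorem inv_base (n : ℕ) : Inv (It 0) ([.zero] :: List.replicate n []) (n + 1) := by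
  refine ⟨by simp, ?_, ?_⟩
  · intro m s hs
    cases m with
    | zero => simp at hs; subst hs; rfl
    | succ m =>
      rw [List.getD_cons_succ, List.getD_eq_getElem?_getD, List.getElem?_replicate] at hs
      split_ifs at hs <;> simp at hs
  · intro m _ l hl hs
    cases l with
    | nil =>
      simp at hs; subst hs
      exact ⟨.zero, by simp, Isom.refl _⟩
    | cons x l => exact absurd (hl x (by simp)) (It_zero x)

theorem Inv.step {F : List (List T)} {n k : ℕ} (h : Inv (It k) F n)
    (hi : ∀ C ∈ connL (k + 1), sz C = k + 1) :
    Inv (It (k + 1)) (runG opT k F (connL (k + 1))) n := by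
  have := h.run (connL (k + 1)) hi
  exact ⟨this.len, this.szd, fun m hm => (this.cov m hm).mono fun x hx => It_succ hx⟩

theorem i0 : Inv (It 0) F0 8 := inv_base 7
theorem s1 : ∀ C ∈ connL 1, sz C = 1 := by
  intro C hC; simp [connL] at hC; subst hC; rfl
theorem i1 : Inv (It 1) F1 8 := i0.step s1
theorem s2 : ∀ C ∈ connL 2, sz C = 2 := i1.conn 2
theorem i2 : Inv (It 2) F2 8 := i1.step s2
theorem s3 : ∀ C ∈ connL 3, sz C = 3 := i2.conn 3
theorem i3 : Inv (It 3) F3 8 := i2.step s3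
theorem s4 : ∀ C ∈ connL 4, sz C = 4 := i3.conn 4
theorem i4 : Inv (It 4) F4 8 := i3.step s4
theorem s5 : ∀ C ∈ connL 5, sz C = 5 := i4.conn 5
theorem i5 : Inv (It 5) F5 8 := i4.step s5
theorem s6 : ∀ C ∈ connL 6, sz C = 6 := i5.conn 6
theorem i6 : Inv (It 6) F6 8 := i5.step s6
theorem s7 : ∀ C ∈ connL 7, sz C = 7 := i6.conn 7
theorem j0 : Inv (It 0) F15 15 := inv_base 14
theorem j7 : Inv (It 7) G7 15 :=
  ((((((j0.step s1).step s2).step s3).step s4).step s5).step s6).step s7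

structure BInv (j : ℕ) (F : List (List T)) : Prop where
  len : F.length = 15
  szd : Szd F
  cov : ∀ m, j < m → m < 15 → Cov (It j) F m

theorem b7 : BInv 7 G7 := ⟨j7.len, j7.szd, fun m _ hm => j7.cov m hm⟩

theorem BInv.conn {F : List (List T)} {n : ℕ} (h : BInv n F) (j : ℕ) :
    ∀ C ∈ connOf j F, sz C = j := by
  intro C hC
  obtain ⟨s, hs, rfl⟩ := List.mem_map.1 hC
  exact h.szd j s hs

theorem mapI_length {B : Type} (g : ℕ → B → B) (i : ℕ) (F : List B) :
    (mapI g i F).length = F.length := by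
  induction F generalizing i with
  | nil => rfl
  | cons x F ih => simp [mapI, ih]

theorem mapI_getD {B : Type} (g : ℕ → B → B) (i : ℕ) (F : List B) (E : B) (m : ℕ)
    (hm : m < F.length) : (mapI g i F).getD m E = g (i + m) (F.getD m E) := by
  induction F generalizing i m with
  | nil => simp at hm
  | cons x F ih =>
    cases m with
    | zero => simp [mapI]
    | succ m =>
      simp only [mapI, List.getD_cons_succ]
      rw [ih (i + 1) m (by simpa using hm)]
      congr 1; ring

theorem mem_foldl_op (Cn ys init : List T) (s : T) :
    s ∈ ys.foldl (fun F y => opT y F Cn) init ↔ s ∈ init ∨ ∃ y ∈ ys, ∃ x ∈ Cn, s = .un y x := by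
  induction ys generalizing init with
  | nil => simp
  | cons y ys ih =>
    rw [List.foldl_cons, ih, opT, List.mem_append, List.mem_map]
    simp only [List.mem_cons, exists_eq_or_imp, or_assoc]
    simp only [eq_comm]

theorem bigT_getD (j : ℕ) (F : List (List T)) (m : ℕ) (hm : m < F.length) (s : T) :
    s ∈ (bigT j F).getD m [] ↔
      s ∈ F.getD m [] ∨ (j < m ∧ ∃ y ∈ small (m - j), ∃ x ∈ connOf j F, s = .un y x) := by
  unfold bigT bigG
  rw [mapI_getD _ _ _ _ _ hm, zero_add]
  by_cases h : m ≤ j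
  · rw [show Nat.ble m j = true from by rw [Nat.ble_eq]; exact h]
    simp [h]
  · have : Nat.ble m j = false := by
      rw [← Bool.not_eq_true, Nat.ble_eq]; exact h
    rw [this]
    simp only [cond_false, bigx, List.mem_append, mem_foldl_op, connOf]
    have : j < m := by omega
    simp [this]

theorem BInv.step {j : ℕ} {F : List (List T)} (hs : ∀ i ≤ j, ∀ C ∈ connL i, sz C = i)
    (h : BInv j F) (hj : 7 ≤ j) (hc : connL (j + 1) = connOf (j + 1) F) :
    BInv (j + 1) (bigT (j + 1) F) := by
  have hlen : (bigT (j + 1) F).length = 15 := by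
    unfold bigT bigG
    rw [mapI_length, h.len]
  refine ⟨hlen, ?_, ?_⟩
  · intro m s hs
    by_cases hm : m < F.length
    · rw [bigT_getD _ _ _ hm] at hs
      rcases hs with hs | ⟨hjm, y, hy, x, hx, rfl⟩
      · exact h.szd m s hs
      · have h1 := i6.szd _ y hy
        have h2 := h.conn _ x hx
        simp [sz, h1, h2]; omega
    · rw [List.getD_eq_default _ _ (by rw [hlen, ← h.len]; omega)] at hs
      simp at hs
  · intro m hjm hm l hl hsz
    by_cases hex : ∃ x ∈ l, x ∈ connL (j + 1)
    · obtain ⟨x, hxl, hx⟩ := hex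
      obtain ⟨l', hl'⟩ : ∃ l', l.Perm (x :: l') := by
        obtain ⟨a, b, rfl⟩ := List.append_of_mem hxl
        exact ⟨a ++ b, List.perm_middle⟩
      rw [hc] at hx
      have h1 := szL_perm hl'
      rw [szL_cons, h.conn _ x hx, hsz] at h1
      obtain ⟨y, hy, e⟩ := i6.cov (m - (j + 1)) (by omega) l' (by
        intro z hz
        have hzz : sz z ≤ szL l' := List.single_le_sum (by simp) _ (List.mem_map_of_mem hz)
        rcases It_succ (hl z (hl'.symm.subset (List.mem_cons_of_mem _ hz))) with ⟨i, hi, hzi⟩ | h2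
        · have := hs i hi z hzi
          exact ⟨i, by omega, hzi⟩
        · rw [hc] at h2
          have := h.conn _ z h2
          omega) (by omega)
      refine ⟨.un y x, ?_, ?_⟩
      · rw [bigT_getD _ _ _ (by rw [h.len]; exact hm)]
        exact Or.inr ⟨hjm, y, hy, x, hx, rfl⟩
      · exact ((isom_unL_perm hl').trans (isom_un (Isom.refl _) e)).trans (isom_comm _ _)
    · obtain ⟨s, hs, e⟩ := h.cov m (by omega) hm l (fun x hx => by
        rcases It_succ (hl x hx) with h | h
        · exact h
        · exact absurd ⟨x, hx, h⟩ hex) hsz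
      refine ⟨s, ?_, e⟩
      rw [bigT_getD _ _ _ (by rw [h.len]; exact hm)]
      exact Or.inl hs

theorem sle_succ {j : ℕ} (h : ∀ i ≤ j, ∀ C ∈ connL i, sz C = i)
    (h' : ∀ C ∈ connL (j + 1), sz C = j + 1) : ∀ i ≤ j + 1, ∀ C ∈ connL i, sz C = i := by
  intro i hi
  rcases Nat.lt_or_ge j i with h1 | h1
  · obtain rfl : i = j + 1 := by omega
    exact h'
  · exact h i h1

theorem sle0 : ∀ i ≤ 0, ∀ C ∈ connL i, sz C = i := by
  intro i hi C hC
  obtain rfl : i = 0 := by omega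
  simp [connL] at hC

theorem sle7 : ∀ i ≤ 7, ∀ C ∈ connL i, sz C = i :=
  sle_succ (sle_succ (sle_succ (sle_succ (sle_succ (sle_succ (sle_succ sle0 s1) s2) s3) s4) s5) s6) s7

theorem b8 : BInv 8 G8 := b7.step sle7 (by norm_num) rfl
theorem sle8 : ∀ i ≤ 8, ∀ C ∈ connL i, sz C = i := sle_succ sle7 (b7.conn 8)
theorem b9 : BInv 9 G9 := b8.step sle8 (by norm_num) rfl
theorem sle9 : ∀ i ≤ 9, ∀ C ∈ connL i, sz C = i := sle_succ sle8 (b8.conn 9)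
theorem b10 : BInv 10 G10 := b9.step sle9 (by norm_num) rfl
theorem sle10 : ∀ i ≤ 10, ∀ C ∈ connL i, sz C = i := sle_succ sle9 (b9.conn 10)
theorem b11 : BInv 11 G11 := b10.step sle10 (by norm_num) rfl
theorem sle11 : ∀ i ≤ 11, ∀ C ∈ connL i, sz C = i := sle_succ sle10 (b10.conn 11)
theorem b12 : BInv 12 G12 := b11.step sle11 (by norm_num) rfl
theorem sle12 : ∀ i ≤ 12, ∀ C ∈ connL i, sz C = i := sle_succ sle11 (b11.conn 12)
theorem b13 : BInv 13 G13 := b12.step sle12 (by norm_num) rfl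
theorem sle13 : ∀ i ≤ 13, ∀ C ∈ connL i, sz C = i := sle_succ sle12 (b12.conn 13)

/-- key coverage: lists of items of size `< k` and total size `k` are complements of members
of `connL k` -/
theorem connL_cov (k : ℕ) (hk : 2 ≤ k) (hk' : k ≤ 13) (l : List T) (hl : ∀ x ∈ l, It (k - 1) x)
    (hs : szL l = k) : ∃ s, .co s ∈ connL k ∧ Isom (gr (unL l)) (gr s) := by
  have key : ∀ F : List (List T), Cov (It (k - 1)) F k → connL k = connOf k F →
      ∃ s, .co s ∈ connL k ∧ Isom (gr (unL l)) (gr s) := by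
    intro F hF hc
    obtain ⟨s, h1, h2⟩ := hF l hl hs
    exact ⟨s, by rw [hc]; exact List.mem_map_of_mem h1, h2⟩
  interval_cases k
  · exact key F1 (i1.cov 2 (by norm_num)) rfl
  · exact key F2 (i2.cov 3 (by norm_num)) rfl
  · exact key F3 (i3.cov 4 (by norm_num)) rfl
  · exact key F4 (i4.cov 5 (by norm_num)) rfl
  · exact key F5 (i5.cov 6 (by norm_num)) rfl
  · exact key F6 (i6.cov 7 (by norm_num)) rfl
  · exact key G7 (b7.cov 8 (by norm_num) (by norm_num)) rfl
  · exact key G8 (b8.cov 9 (by norm_num) (by norm_num)) rfl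
  · exact key G9 (b9.cov 10 (by norm_num) (by norm_num)) rfl
  · exact key G10 (b10.cov 11 (by norm_num) (by norm_num)) rfl
  · exact key G11 (b11.cov 12 (by norm_num) (by norm_num)) rfl
  · exact key G12 (b12.cov 13 (by norm_num) (by norm_num)) rfl

theorem dl_cov (l : List T) (hl : ∀ x ∈ l, It 13 x) (hs : szL l = 14) :
    ∃ s ∈ dl, Isom (gr (unL l)) (gr s) := b13.cov 14 (by norm_num) (by norm_num) l hl hs

theorem dl_sz : ∀ s ∈ dl, sz s = 14 := b13.szd 14

end Cg

namespace Cg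

/-- numeric invariants -/
theorem st_inv (t : ℕ) (s : T) (h : sz s ≤ t) :
    0 < (st t s).a ∧ 0 < (st t s).c ∧ (t + 1) * (st t s).d ≤ sz s * (st t s).c ∧
      (t + 1 - sz s) * (st t s).b ≤ sz s * (st t s).a := by
  induction s with
  | zero => simp [st, sz]
  | one =>
    simp only [sz] at h
    simp [st, sz]
    omega
  | un l r hl hr =>
    simp only [sz] at h
    obtain ⟨a1, c1, d1, b1⟩ := hl (by omega)
    obtain ⟨a2, c2, d2, b2⟩ := hr (by omega)
    simp only [st, St.un, sz]
    set x := st t l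
    set y := st t r
    refine ⟨by positivity, by positivity, ?_, ?_⟩
    · nlinarith [Nat.mul_le_mul_left x.c d2, Nat.mul_le_mul_left y.c d1]
    · have e1 : (t + 1 - (sz l + sz r)) * y.b ≤ sz r * y.a :=
        (Nat.mul_le_mul_right _ (by omega)).trans b2
      have e2 : (t + 1 - (sz l + sz r)) * x.b ≤ sz l * x.a :=
        (Nat.mul_le_mul_right _ (by omega)).trans b1
      nlinarith [Nat.mul_le_mul_left x.a e1, Nat.mul_le_mul_left y.a e2]
  | co s ih =>
    simp only [sz] at h
    obtain ⟨a1, c1, d1, b1⟩ := ih h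
    simp only [st, St.co, sz]
    set x := st t s
    have hdc : x.d < x.c := by
      by_contra hh
      have : (t + 1) * x.c ≤ sz s * x.c := (Nat.mul_le_mul_left _ (by omega)).trans d1
      have := Nat.le_of_mul_le_mul_right this c1
      omega
    obtain ⟨e, he⟩ := Nat.exists_eq_add_of_lt hdc
    obtain ⟨q, hq⟩ := Nat.exists_eq_add_of_le h
    refine ⟨by omega, by omega, ?_, ?_⟩
    · have : t + 1 - sz s = q + 1 := by omega
      rw [this] at b1
      rw [hq]
      nlinarith
    · have : t + 1 - sz s = q + 1 := by omega
      rw [this]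
      have h2 : x.c - x.d = e + 1 := by omega
      rw [h2]
      rw [he, hq] at d1
      nlinarith

theorem st_dc (t : ℕ) (s : T) (h : sz s ≤ t) : (st t s).d < (st t s).c := by
  have := (st_inv t (.co s) h).1
  simp only [st, St.co] at this
  omega

theorem st_bound (t : ℕ) (s : T) (h : sz s ≤ t) :
    (st t s).a + (st t s).b ≤ (t + 1) ^ sz s ∧ (st t s).c ≤ (t + 1) ^ sz s := by
  induction s with
  | zero => simp [st, sz]
  | one => simp [st, sz]
  | un l r hl hr =>
    simp only [sz] at h
    obtain ⟨a1, c1⟩ := hl (by omega)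
    obtain ⟨a2, c2⟩ := hr (by omega)
    simp only [st, St.un, sz, pow_add]
    refine ⟨?_, Nat.mul_le_mul c1 c2⟩
    refine le_trans ?_ (Nat.mul_le_mul a1 a2)
    nlinarith [Nat.zero_le ((st t l).b * (st t r).b)]
  | co s ih =>
    simp only [sz] at h
    obtain ⟨a1, c1⟩ := ih h
    have := st_dc t s h
    simp only [st, St.co, sz]
    exact ⟨by omega, a1⟩

/-- packing of a list -/
def pk : List ℕ → ℕ
  | [] => 0
  | x :: xs => x + 2 ^ 68 * pk xs

theorem pk_append (x y : List ℕ) : pk (x ++ y) = pk x + pk y <<< (68 * x.length) := by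
  induction x with
  | nil => simp [pk]
  | cons a x ih =>
    simp only [List.cons_append, pk, ih, List.length_cons, Nat.shiftLeft_eq, mul_add, pow_add]
    ring

theorem pk_lin {α : Type} (L : List α) (f g : α → ℕ) (p q : ℕ) :
    pk (L.map fun x => p * f x + q * g x) = p * pk (L.map f) + q * pk (L.map g) := by
  induction L with
  | nil => simp [pk]
  | cons x L ih => simp only [List.map_cons, pk, ih]; ring

theorem pk_V (L : List ℕ) : pk L = V 68 L.length (fun i => L.getD i 0) := by
  induction L with
  | nil => simp [pk, V]
  | cons x L ih => rw [List.length_cons, V_succ', pk, ih]; simp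

structure Rep (P : PV) (L : List T) : Prop where
  n : P.n = L.length
  a : P.a = pk (L.map fun s => (st 17 s).a)
  b : P.b = pk (L.map fun s => (st 17 s).b)
  c : P.c = pk (L.map fun s => (st 17 s).c)
  d : P.d = pk (L.map fun s => (st 17 s).d)

theorem Rep.opP {P Q : PV} {L M : List T} (C : T) (h : Rep P L) (h' : Rep Q M) :
    Rep (opP C P Q) (opT C L M) := by
  have k1 : ∀ f : T → ℕ, ∀ p : ℕ, pk (M.map fun x => p * f x) = p * pk (M.map f) := by
    intro f p
    have := pk_lin M f f p 0
    simpa using this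
  refine ⟨?_, ?_, ?_, ?_, ?_⟩
  · simp [Cg.opP, PV.op, opT, h.n, h'.n]
  · simp only [Cg.opP, PV.op, opT, List.map_append, pk_append, h.a, h.n, h'.a, List.length_map,
      List.map_map, Function.comp_def, st, St.un, k1]
  · simp only [Cg.opP, PV.op, opT, List.map_append, pk_append, h.a, h.b, h.n, h'.a, h'.b,
      List.length_map, List.map_map, Function.comp_def, st, St.un, pk_lin]
  · simp only [Cg.opP, PV.op, opT, List.map_append, pk_append, h.c, h.n, h'.c, List.length_map,
      List.map_map, Function.comp_def, st, St.un, k1]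
  · simp only [Cg.opP, PV.op, opT, List.map_append, pk_append, h.c, h.d, h.n, h'.c, h'.d,
      List.length_map, List.map_map, Function.comp_def, st, St.un, pk_lin]

theorem Rep.app {P Q : PV} {L M : List T} (h : Rep P L) (h' : Rep Q M) :
    Rep (PV.app P Q) (L ++ M) := by
  refine ⟨?_, ?_, ?_, ?_, ?_⟩ <;>
    simp [PV.app, pk_append, h.a, h.b, h.c, h.d, h.n, h'.a, h'.b, h'.c, h'.d, h'.n]

theorem pk_sub {α : Type} (L : List α) (f g : α → ℕ) (h : ∀ x ∈ L, g x ≤ f x) :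
    pk (L.map fun x => f x - g x) + pk (L.map g) = pk (L.map f) := by
  induction L with
  | nil => simp [pk]
  | cons x L ih =>
    have h1 := ih (fun y hy => h y (by simp [hy]))
    have h2 := h x (by simp)
    simp only [List.map_cons, pk, ← h1]
    rw [mul_add]
    omega

theorem Rep.co {P : PV} {L : List T} (h : Rep P L) (hL : ∀ s ∈ L, sz s ≤ 17) :
    Rep (PV.co P) (L.map T.co) := by
  refine ⟨?_, ?_, ?_, ?_, ?_⟩
  · simp [PV.co, h.n]
  · have := pk_sub L (fun s => (st 17 s).c) (fun s => (st 17 s).d)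
      (fun s hs => (st_dc 17 s (hL s hs)).le)
    simp only [PV.co, h.c, h.d, List.map_map, Function.comp_def, st, St.co]
    omega
  · simp only [PV.co, h.d, List.map_map, Function.comp_def, st, St.co]
  · have := pk_lin L (fun s => (st 17 s).a) (fun s => (st 17 s).b) 1 1
    simp only [one_mul] at this
    simp only [PV.co, h.a, h.b, List.map_map, Function.comp_def, st, St.co, this]
  · simp only [PV.co, h.b, List.map_map, Function.comp_def, st, St.co]

theorem Rep.empty : Rep PE [] := ⟨rfl, rfl, rfl, rfl, rfl⟩
theorem Rep.zero : Rep ⟨1, 1, 0, 1, 0⟩ [.zero] := ⟨rfl, rfl, rfl, rfl, rfl⟩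

theorem go_rel {P : List PV} {F : List (List T)} (C : T) (j : ℕ) {A : List PV}
    {B : List (List T)} (hA : List.Forall₂ Rep A B) (h : List.Forall₂ Rep P F) :
    List.Forall₂ Rep (go (opP C) j A P) (go (opT C) j B F) := by
  induction h generalizing A B with
  | nil => exact List.rel_reverse hA
  | @cons x y xs ys hxy _ ih =>
    rw [go, go]
    apply ih
    refine List.Forall₂.cons ?_ hA
    have hl := hA.length_eq
    by_cases hj : j < A.length
    · rw [List.getElem?_eq_getElem hj, List.getElem?_eq_getElem (hl ▸ hj)]
      exact hxy.opP C (List.Forall₂.get hA hj (hl ▸ hj))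
    · rw [List.getElem?_eq_none (by omega), List.getElem?_eq_none (by omega)]
      exact hxy

theorem knap_rel {P : List PV} {F : List (List T)} (j : ℕ) (items : List T)
    (h : List.Forall₂ Rep P F) :
    List.Forall₂ Rep (runG opP j P items) (runG opT j F items) := by
  induction items generalizing P F with
  | nil => exact h
  | cons C items ih => exact ih (go_rel C j List.Forall₂.nil h)

theorem fold_rel {Cn : PV} {Ct : List T} (hC : Rep Cn Ct) (ys : List T) {P : PV} {F : List T}
    (h : Rep P F) :
    Rep (ys.foldl (fun F y => opP y F Cn) P) (ys.foldl (fun F y => opT y F Ct) F) := by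
  induction ys generalizing P F with
  | nil => exact h
  | cons y ys ih => exact ih (h.opP y hC)

theorem mapI_rel (g : ℕ → PV → PV) (g' : ℕ → List T → List T)
    (hg : ∀ m x y, Rep x y → Rep (g m x) (g' m y)) (i : ℕ) {P : List PV} {F : List (List T)}
    (h : List.Forall₂ Rep P F) : List.Forall₂ Rep (mapI g i P) (mapI g' i F) := by
  induction h generalizing i with
  | nil => exact List.Forall₂.nil
  | cons hxy _ ih => exact List.Forall₂.cons (hg _ _ _ hxy) (ih _)

theorem getD_rel {P : List PV} {F : List (List T)} (h : List.Forall₂ Rep P F) (j : ℕ) :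
    Rep (P.getD j PE) (F.getD j []) := by
  induction h generalizing j with
  | nil => simpa using Rep.empty
  | cons hxy _ ih =>
    cases j with
    | zero => simpa using hxy
    | succ j => simpa using ih j

theorem big_rel {P : List PV} {F : List (List T)} (j : ℕ) (hj : j ≤ 17) (hF : Szd F)
    (h : List.Forall₂ Rep P F) :
    List.Forall₂ Rep (bigG opP PV.app PE PV.co j P) (bigT j F) := by
  unfold bigT bigG
  apply mapI_rel _ _ _ _ h
  intro m x y hxy
  cases Nat.ble m j with
  | true => exact hxy
  | false =>
    simp only [cond_false]
    refine hxy.app (fold_rel ?_ _ Rep.empty)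
    exact (getD_rel h j).co fun s hs => by rw [hF j s hs]; exact hj

theorem r7 : List.Forall₂ Rep P7 G7 := by
  unfold P7 G7 run7
  apply knap_rel
  apply knap_rel
  apply knap_rel
  apply knap_rel
  apply knap_rel
  apply knap_rel
  apply knap_rel
  unfold F15
  exact .cons Rep.zero (.cons Rep.empty (.cons Rep.empty (.cons Rep.empty (.cons Rep.empty
    (.cons Rep.empty (.cons Rep.empty (.cons Rep.empty (.cons Rep.empty (.cons Rep.empty
    (.cons Rep.empty (.cons Rep.empty (.cons Rep.empty (.cons Rep.empty (.cons Rep.empty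
    .nil))))))))))))))

theorem r8 : List.Forall₂ Rep P8 G8 := big_rel 8 (by norm_num) b7.szd r7
theorem r9 : List.Forall₂ Rep P9 G9 := big_rel 9 (by norm_num) b8.szd r8
theorem r10 : List.Forall₂ Rep P10 G10 := big_rel 10 (by norm_num) b9.szd r9
theorem r11 : List.Forall₂ Rep P11 G11 := big_rel 11 (by norm_num) b10.szd r10
theorem r12 : List.Forall₂ Rep P12 G12 := big_rel 12 (by norm_num) b11.szd r11
theorem r13 : List.Forall₂ Rep P13 G13 := big_rel 13 (by norm_num) b12.szd r12
theorem rFIN : Rep FIN dl := getD_rel r13 14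

/-- the hash of a tree -/
def hsh (s : T) : ℕ := (((st 17 s).a ^^^ ((st 17 s).c - (st 17 s).d)) >>> 6) % 2 ^ 33

theorem fold_V (n : ℕ) (f : ℕ → ℕ) :
    V 34 (2 * n) f = V 68 n (fun i => f (2 * i)) + V 68 n (fun i => f (2 * i + 1)) <<< 34 := by
  rw [Nat.shiftLeft_eq]
  induction n with
  | zero => simp [V]
  | succ n ih =>
    have : 2 * (n + 1) = 2 * n + 1 + 1 := by ring
    unfold V at *
    rw [this, Finset.sum_range_succ, Finset.sum_range_succ, ih, Finset.sum_range_succ,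
      Finset.sum_range_succ]
    have e1 : 34 * (2 * n) = 68 * n := by ring
    have e2 : 34 * (2 * n + 1) = 68 * n + 34 := by ring
    rw [e1, e2, pow_add]
    ring

theorem const_V (w N c : ℕ) (hw : 0 < w) :
    ((1 <<< (w * N)) - 1) / (2 ^ w - 1) * c = V w N (fun _ => c) := by
  unfold V
  rw [← Finset.mul_sum, mul_comm, Nat.one_shiftLeft]
  have := Nat.geomSum_eq (m := 2 ^ w) (by
    calc 2 = 2 ^ 1 := rfl
      _ ≤ 2 ^ w := Nat.pow_le_pow_right (by norm_num) hw) N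
  simp only [pow_mul]
  rw [this]

theorem slot_hash (Y i : ℕ) :
    slot 68 (Y >>> 6) i &&& (2 ^ 33 - 1) = (slot 68 Y i >>> 6) % 2 ^ 33 := by
  rw [Nat.and_two_pow_sub_one_eq_mod]
  unfold slot
  apply Nat.eq_of_testBit_eq
  intro j
  simp only [← Nat.shiftRight_eq_div_pow, Nat.testBit_mod_two_pow, Nat.testBit_shiftRight]
  by_cases h : j < 33
  · have h1 : j < 68 := by omega
    have h2 : 6 + j < 68 := by omega
    simp only [h, h1, h2, decide_true, Bool.true_and]
    congr 1
    ring
  · simp [h]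

theorem hash_main (N : ℕ) (hN : N ≤ 2 * 109376) (y : ℕ) (h : ℕ → ℕ) (Zs : List ℕ)
    (hh : ∀ i < N, h i < 2 ^ 33)
    (hy : y = V 68 N h) (hs : sorted NN GG (phases NN GG Zs (fold y)) = true) :
    Set.InjOn h (Set.Iio N) := by
  obtain ⟨n, hn⟩ : ∃ n, n = 109376 := ⟨_, rfl⟩
  have hNN : NN = 2 * n := by rw [hn]; rfl
  rw [← hn] at hN
  let h0 : ℕ → ℕ := fun i => if i < N then h i else 0
  have hh0 : ∀ i, h0 i < 2 ^ 33 := by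
    intro i; simp only [h0]; split_ifs with hi
    · exact hh i hi
    · norm_num
  have hh68 : ∀ i, h0 i < 2 ^ 68 := fun i => (hh0 i).trans (by norm_num)
  have hy0 : y = V 68 (n + n) h0 := by
    obtain ⟨k, hk⟩ := Nat.exists_eq_add_of_le hN
    rw [← two_mul, hk, V_append, V_zero 68 k, mul_zero, add_zero, hy]
    · apply V_congr
      intro i hi; simp [h0, hi]
    · intro i _; simp [h0]
  have hlow : y &&& (1 <<< (68 * n) - 1) = V 68 n h0 := by
    rw [Nat.one_shiftLeft, Nat.and_two_pow_sub_one_eq_mod, hy0, V_append, Nat.add_mul_mod_self_left,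
      Nat.mod_eq_of_lt (V_lt _ _ _ fun i _ => hh68 i)]
  have hhigh : y >>> (68 * n) = V 68 n (fun i => h0 (n + i)) := by
    rw [Nat.shiftRight_eq_div_pow, hy0, V_append, Nat.add_mul_div_left _ _ (by positivity),
      Nat.div_eq_of_lt (V_lt _ _ _ fun i _ => hh68 i), zero_add]
  let f : ℕ → ℕ := fun i => if i % 2 = 0 then h0 (i / 2) else h0 (n + i / 2)
  have hfold : fold y = V 34 NN f := by
    have : fold y = (y &&& (1 <<< (68 * n) - 1)) + (y >>> (68 * n)) <<< 34 := by rw [hn]; rfl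
    have A : V 68 n (fun i => f (2 * i)) = V 68 n h0 := by
      apply V_congr; intro i _
      simp [f]
    have B : V 68 n (fun i => f (2 * i + 1)) = V 68 n (fun i => h0 (n + i)) := by
      apply V_congr; intro i _
      have h1 : (2 * i + 1) % 2 = 1 := by omega
      have h2 : (2 * i + 1) / 2 = i := by omega
      simp [f, h1, h2]
    rw [this, hNN, fold_V, hlow, hhigh, A, B]
  have hf : ∀ i, f i < 2 ^ 33 := by
    intro i; simp only [f]; split_ifs <;> exact hh0 _
  have hinj := sort_main NN GG (fold y) Zs f (by rw [hNN]; omega) (const_V 34 NN (2 ^ 33) (by norm_num))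
    ⟨hfold, fun i _ => hf i⟩ hs
  rw [hNN] at hinj
  let φ : ℕ → ℕ := fun i => if i < n then 2 * i else 2 * (i - n) + 1
  have hφ : ∀ i < N, φ i < 2 * n ∧ f (φ i) = h i := by
    intro i hi
    simp only [φ]
    split_ifs with h1
    · refine ⟨by omega, ?_⟩
      simp [f, h0, hi]
    · refine ⟨by omega, ?_⟩
      have e1 : (2 * (i - n) + 1) % 2 = 1 := by omega
      have e2 : n + (2 * (i - n) + 1) / 2 = i := by omega
      simp only [f, e1, e2, h0, hi, if_true]
      simp
  intro i hi j hj hij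
  rw [Set.mem_Iio] at hi hj
  have := hinj (hφ i hi).1 (hφ j hj).1 (by rw [(hφ i hi).2, (hφ j hj).2, hij])
  simp only [φ] at this
  split_ifs at this <;> omega

theorem hash_fin (P : PV) (L : List T) (hP : Rep P L) (hL : ∀ s ∈ L, sz s = 14)
    (hlen : L.length = 218751) (Zs : List ℕ)
    (hs : sorted NN GG (phases NN GG Zs (fold (hashV P))) = true) :
    Set.InjOn (fun i => hsh (L.getD i .zero)) (Set.Iio L.length) := by
  refine hash_main L.length (by rw [hlen]; norm_num) (hashV P) _ Zs ?_ ?_ hs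
  · intro i _; exact Nat.mod_lt _ (by norm_num)
  · have hbd : ∀ s ∈ L, (st 17 s).a < 2 ^ 68 ∧ (st 17 s).c < 2 ^ 68 := by
      intro s hs
      have h1 := hL s hs
      have h2 := st_bound 17 s (by omega)
      rw [h1] at h2
      have h3 : (17 + 1) ^ 14 < 2 ^ 68 := by norm_num
      omega
    have hget : ∀ (g : T → ℕ) (i : ℕ), i < L.length → (L.map g).getD i 0 = g (L.getD i .zero) := by
      intro g i hi
      rw [List.getD_eq_getElem _ _ (by simpa using hi), List.getD_eq_getElem _ _ hi, List.getElem_map]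
    have hmem : ∀ i < L.length, L.getD i .zero ∈ L := by
      intro i hi
      rw [List.getD_eq_getElem _ _ hi]; exact List.getElem_mem _
    have ha : P.a = V 68 L.length (fun i => (st 17 (L.getD i .zero)).a) := by
      rw [hP.a, pk_V, List.length_map]
      apply V_congr; intro i hi; rw [hget _ i hi]
    have hc : P.c - P.d =
        V 68 L.length (fun i => (st 17 (L.getD i .zero)).c - (st 17 (L.getD i .zero)).d) := by
      rw [hP.c, hP.d, pk_V, pk_V, List.length_map, List.length_map, V_sub]
      · apply V_congr; intro i hi; rw [hget _ i hi, hget _ i hi]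
      · intro i hi
        rw [hget _ i hi, hget _ i hi]
        have := hL _ (hmem i hi)
        exact (st_dc 17 _ (by omega)).le
    have hM : MASK = V 68 L.length (fun _ => 2 ^ 33 - 1) := by
      rw [← const_V 68 _ _ (by norm_num), hlen]; rfl
    have hMl : ∀ i < L.length, (fun _ : ℕ => 2 ^ 33 - 1) i < 2 ^ 68 := fun i _ => by norm_num
    have hlt : hashV P < 2 ^ (68 * L.length) := by
      refine lt_of_le_of_lt Nat.and_le_right ?_
      rw [hM]
      exact V_lt _ _ _ hMl
    rw [← V_slot 68 L.length (hashV P) hlt]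
    apply V_congr
    intro i hi
    unfold hashV hsh
    rw [slot_and, hM, slot_V _ _ _ hMl, if_pos hi, slot_hash, slot_xor, ha, hc, slot_V, slot_V,
      if_pos hi, if_pos hi]
    · intro j hj
      have := (hbd _ (hmem j hj)).2
      omega
    · intro j hj
      exact (hbd _ (hmem j hj)).1

theorem dl_inj (s s' : T) (hs : s ∈ dl) (hs' : s' ∈ dl) (h : hsh s = hsh s') : s = s' := by
  have hb := big_check
  rw [Bool.and_eq_true] at hb
  have h1 := Nat.eq_of_beq_eq_true hb.1
  rw [rFIN.n] at h1
  have := hash_fin FIN dl rFIN dl_sz h1 Zl hb.2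
  obtain ⟨i, hi, rfl⟩ := List.mem_iff_getElem.1 hs
  obtain ⟨j, hj, rfl⟩ := List.mem_iff_getElem.1 hs'
  have e := @this i hi j hj (by
    simp only
    rw [List.getD_eq_getElem _ _ hi, List.getD_eq_getElem _ _ hj]; exact h)
  subst e
  rfl

end Cg

namespace Cg
open Matrix

section
variable {V W : Type} [Fintype V] [DecidableEq V] [Fintype W] [DecidableEq W]

open Classical in
/-- the real adjacency matrix -/
noncomputable def Am {V : Type} (G : SimpleGraph V) : Matrix V V ℝ :=
  Matrix.of fun i j => if G.Adj i j then 1 else 0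

theorem adjCharPoly_eq (G : SimpleGraph V) : adjCharPoly G = (Am G).charpoly := by
  unfold adjCharPoly
  congr 1

/-- `t - A` -/
noncomputable def MM (t : ℝ) (G : SimpleGraph V) : Matrix V V ℝ := t • (1 : Matrix V V ℝ) - Am G
/-- `(t + 1) + A` -/
noncomputable def NM (t : ℝ) (G : SimpleGraph V) : Matrix V V ℝ :=
  (t + 1) • (1 : Matrix V V ℝ) + Am G

/-- the all ones matrix -/
def JM (V : Type) : Matrix V V ℝ := Matrix.of fun _ _ => 1

structure SG (M : Matrix V V ℝ) (a b : ℝ) : Prop where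
  det : M.det = a
  sol : ∃ u : V → ℝ, M *ᵥ u = (fun _ => 1) ∧ a * ∑ i, u i = b

theorem SG.add {M : Matrix V V ℝ} {a b : ℝ} (h : SG M a b) (e : ℝ) (he : a + e * b ≠ 0) (ha : a ≠ 0) :
    SG (M + e • JM V) (a + e * b) b := by
  obtain ⟨u, hu, hs⟩ := h.sol
  have h1 : M + e • JM V = M * (1 + Matrix.replicateCol Unit (e • u) *
      Matrix.replicateRow Unit (fun _ : V => (1 : ℝ))) := by
    rw [mul_add, mul_one]
    congr 1
    rw [← Matrix.mul_assoc]
    ext i j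
    have := congrFun hu i
    simp only [Matrix.mulVec, dotProduct] at this
    simp only [Matrix.mul_apply, Finset.univ_unique, Finset.sum_singleton,
      Matrix.replicateCol_apply, Matrix.replicateRow_apply, mul_one, Matrix.smul_apply, JM,
      Matrix.of_apply, Pi.smul_apply, smul_eq_mul]
    have h2 : ∑ k, M i k * (e * u k) = e * ∑ k, M i k * u k := by
      rw [Finset.mul_sum]
      exact Finset.sum_congr rfl fun k _ => by ring
    rw [h2, this, mul_one]
  constructor
  · rw [h1, Matrix.det_mul, Matrix.det_one_add_replicateCol_mul_replicateRow, h.det]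
    simp only [dotProduct, Pi.smul_apply, smul_eq_mul, one_mul]
    rw [← Finset.mul_sum, ← hs]; ring
  · have hne : 1 + e * ∑ i, u i ≠ 0 := by
      intro h0
      apply he
      rw [← hs]
      linear_combination a * h0
    refine ⟨fun i => u i / (1 + e * ∑ i, u i), ?_, ?_⟩
    · funext i
      have h2 := congrFun hu i
      simp only [Matrix.mulVec, dotProduct] at h2
      change ∑ k, (M i k + e * 1) * (u k / (1 + e * ∑ i, u i)) = 1
      have h3 : ∀ k, (M i k + e * 1) * (u k / (1 + e * ∑ i, u i)) =
          (M i k * u k + e * u k) / (1 + e * ∑ i, u i) := fun k => by ring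
      rw [Finset.sum_congr rfl fun k _ => h3 k, ← Finset.sum_div, Finset.sum_add_distrib,
        ← Finset.mul_sum]
      have h4 : ∑ k, M i k * u k = 1 := h2
      rw [h4, div_self hne]
    · rw [← Finset.sum_div, ← hs]
      field_simp

theorem SG.blocks {M : Matrix V V ℝ} {N : Matrix W W ℝ} {a b a' b' : ℝ} (h : SG M a b)
    (h' : SG N a' b') : SG (Matrix.fromBlocks M 0 0 N) (a * a') (a * b' + b * a') := by
  obtain ⟨u, hu, hs⟩ := h.sol
  obtain ⟨u', hu', hs'⟩ := h'.sol
  constructor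
  · rw [Matrix.det_fromBlocks_zero₂₁, h.det, h'.det]
  · refine ⟨Sum.elim u u', ?_, ?_⟩
    · rw [Matrix.fromBlocks_mulVec]
      funext i
      rcases i with i | i
      · simp [hu]
      · simp [hu']
    · rw [Fintype.sum_sum_type]
      simp only [Sum.elim_inl, Sum.elim_inr]
      rw [← hs, ← hs']; ring

theorem Am_sum (G : SimpleGraph V) (H : SimpleGraph W) :
    Am (G.sum H) = Matrix.fromBlocks (Am G) 0 0 (Am H) := by
  ext i j
  rcases i with i | i <;> rcases j with j | j <;> simp [Am, SimpleGraph.sum] <;> congr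

theorem Am_compl (G : SimpleGraph V) : Am Gᶜ = JM V - 1 - Am G := by
  ext i j
  by_cases h : i = j
  · subst h; simp [Am, JM]
  · by_cases h2 : G.Adj i j <;> simp [Am, JM, h, h2]

theorem MM_sum (t : ℝ) (G : SimpleGraph V) (H : SimpleGraph W) :
    MM t (G.sum H) = Matrix.fromBlocks (MM t G) 0 0 (MM t H) := by
  unfold MM
  rw [Am_sum, ← Matrix.fromBlocks_one, Matrix.fromBlocks_smul, sub_eq_add_neg,
    Matrix.fromBlocks_neg, Matrix.fromBlocks_add]
  simp [sub_eq_add_neg]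

theorem NM_sum (t : ℝ) (G : SimpleGraph V) (H : SimpleGraph W) :
    NM t (G.sum H) = Matrix.fromBlocks (NM t G) 0 0 (NM t H) := by
  unfold NM
  rw [Am_sum, ← Matrix.fromBlocks_one, Matrix.fromBlocks_smul, Matrix.fromBlocks_add]
  simp

theorem MM_compl (t : ℝ) (G : SimpleGraph V) : MM t Gᶜ = NM t G + (-1 : ℝ) • JM V := by
  unfold MM NM
  rw [Am_compl, add_smul]
  simp only [neg_smul, one_smul]
  abel

theorem NM_compl (t : ℝ) (G : SimpleGraph V) : NM t Gᶜ = MM t G + (1 : ℝ) • JM V := by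
  unfold MM NM
  rw [Am_compl, add_smul]
  simp only [one_smul]
  abel

structure GS (t : ℕ) (G : SimpleGraph V) (x : St) : Prop where
  m : SG (MM t G) x.a x.b
  n : SG (NM t G) x.c x.d

theorem GS.un {t : ℕ} {G : SimpleGraph V} {H : SimpleGraph W} {x y : St} (h : GS t G x)
    (h' : GS t H y) : GS t (G.sum H) (x.un y) := by
  constructor
  · rw [MM_sum]
    have := h.m.blocks h'.m
    simpa [St.un] using this
  · rw [NM_sum]
    have := h.n.blocks h'.n
    simpa [St.un] using this

theorem GS.co {t : ℕ} {G : SimpleGraph V} {x : St} (h : GS t G x) (ha : 0 < x.a) (hd : x.d < x.c) :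
    GS t Gᶜ x.co := by
  have hd' : (x.d : ℝ) < x.c := by exact_mod_cast hd
  have ha' : (0 : ℝ) < x.a := by exact_mod_cast ha
  have hd0 : (0 : ℝ) ≤ x.d := Nat.cast_nonneg _
  have hb0 : (0 : ℝ) ≤ x.b := Nat.cast_nonneg _
  constructor
  · rw [MM_compl]
    have := h.n.add (-1) (by linarith) (by linarith)
    simp only [St.co]
    rw [Nat.cast_sub hd.le]
    convert this using 1
    ring
  · rw [NM_compl]
    have := h.m.add 1 (by linarith) (by linarith)
    simp only [St.co]
    push_cast
    convert this using 1
    ring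

end

theorem gs_tree (t : ℕ) (s : T) (h : sz s ≤ t) : GS t (gr s) (st t s) := by
  induction s with
  | zero =>
    change GS (V := Empty) t (⊥ : SimpleGraph Empty) ⟨1, 0, 1, 0⟩
    constructor
    · exact ⟨by simp, fun _ => 0, by funext i; exact i.elim, by simp⟩
    · exact ⟨by simp, fun _ => 0, by funext i; exact i.elim, by simp⟩
  | one =>
    change GS (V := Unit) t (⊥ : SimpleGraph Unit) ⟨t, 1, t + 1, 1⟩
    simp only [sz] at h
    have ht : (0 : ℝ) < t := by exact_mod_cast h
    constructor
    · refine ⟨by simp [MM, Am], fun _ => (t : ℝ)⁻¹, ?_, ?_⟩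
      · funext i; simp [MM, Am, Matrix.mulVec, dotProduct, ht.ne']
      · simp [ht.ne']
    · have ht1 : (t : ℝ) + 1 ≠ 0 := by positivity
      refine ⟨by simp [NM, Am], fun _ => ((t : ℝ) + 1)⁻¹, ?_, ?_⟩
      · funext i; simp [NM, Am, Matrix.mulVec, dotProduct, ht1]
      · simp [ht1]
  | un l r hl hr =>
    simp only [sz] at h
    exact (hl (by omega)).un (hr (by omega))
  | co s ih =>
    exact (ih h).co (st_inv t s h).1 (st_dc t s h)

theorem charpoly_iso {V W : Type} [Fintype V] [DecidableEq V] [Fintype W] [DecidableEq W]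
    {G : SimpleGraph V} {H : SimpleGraph W} (h : Isom G H) : adjCharPoly G = adjCharPoly H := by
  obtain ⟨e⟩ := h
  rw [adjCharPoly_eq, adjCharPoly_eq, ← Matrix.charpoly_reindex e.toEquiv (Am G)]
  congr 1
  ext i j
  simp only [Am, Matrix.reindex_apply, Matrix.submatrix_apply, Matrix.of_apply]
  have := e.symm.map_adj_iff (v := i) (w := j)
  congr 1
  exact propext this

theorem eval_M {V : Type} [Fintype V] [DecidableEq V] (G : SimpleGraph V) (t : ℝ) :
    (adjCharPoly G).eval t = (MM t G).det := by
  rw [adjCharPoly_eq, Matrix.eval_charpoly, MM, Matrix.smul_one_eq_diagonal]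
  rfl

theorem eval_N {V : Type} [Fintype V] [DecidableEq V] (G : SimpleGraph V) (t : ℝ) :
    (adjCharPoly G).eval (-(t + 1)) = (-1) ^ Fintype.card V * (NM t G).det := by
  rw [eval_M, ← Matrix.det_neg]
  congr 1
  unfold MM NM
  rw [neg_smul]; abel

theorem st_of_gen {V W : Type} [Fintype V] [DecidableEq V] [Fintype W] [DecidableEq W]
    {G : SimpleGraph V} {H : SimpleGraph W} (s s' : T) (t : ℕ) (hs : Isom G (gr s))
    (hs' : Isom H (gr s')) (hsz : sz s = sz s') (ht : sz s ≤ t) (h : GenCospectral G H) :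
    st t s = st t s' := by
  obtain ⟨h1, h2⟩ := h
  unfold Cospectral at h1 h2
  rw [charpoly_iso hs, charpoly_iso hs'] at h1
  rw [charpoly_iso hs.compl, charpoly_iso hs'.compl] at h2
  change adjCharPoly (gr (.co s)) = adjCharPoly (gr (.co s')) at h2
  have key : ∀ s s' : T, sz s = sz s' → sz s ≤ t → adjCharPoly (gr s) = adjCharPoly (gr s') →
      (st t s).a = (st t s').a ∧ (st t s).c = (st t s').c := by
    intro s s' hsz ht h
    have g1 := gs_tree t s ht
    have g2 := gs_tree t s' (hsz ▸ ht)
    constructor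
    · have := congrArg (Polynomial.eval (t : ℝ)) h
      rw [eval_M, eval_M, g1.m.det, g2.m.det] at this
      exact_mod_cast this
    · have := congrArg (Polynomial.eval (-((t : ℝ) + 1))) h
      rw [eval_N, eval_N, g1.n.det, g2.n.det, card_vt, card_vt, hsz] at this
      have := mul_left_cancel₀ (by simp) this
      exact_mod_cast this
  obtain ⟨k1, k2⟩ := key s s' hsz ht h1
  obtain ⟨k3, k4⟩ := key (.co s) (.co s') hsz ht h2
  have e1 := st_dc t s ht
  have e2 := st_dc t s' (hsz ▸ ht)
  simp only [st, St.co] at k3 k4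
  have hb : (st t s).b = (st t s').b := by omega
  have hd : (st t s).d = (st t s').d := by omega
  cases hx : st t s
  cases hy : st t s'
  rw [hx, hy] at k1 k2 hb hd
  simp only at k1 k2 hb hd
  rw [k1, k2, hb, hd]

/-- cospectral graphs have the same trace of the square -/
theorem trace_sq {V W : Type} [Fintype V] [DecidableEq V] [Fintype W] [DecidableEq W]
    (A : Matrix V V ℝ) (B : Matrix W W ℝ) (hc : Fintype.card V = Fintype.card W)
    (h : A.charpoly = B.charpoly) : (A * A).trace = (B * B).trace := by
  have key : ∀ {V : Type} [Fintype V] [DecidableEq V] (A : Matrix V V ℝ) (x : ℝ),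
      (A * A).charpoly.eval (x ^ 2) =
        A.charpoly.eval x * ((-1) ^ Fintype.card V * A.charpoly.eval (-x)) := by
    intro V _ _ A x
    simp only [Matrix.eval_charpoly]
    rw [← Matrix.det_neg, ← Matrix.det_mul]
    congr 1
    change Matrix.diagonal (fun _ => x ^ 2) - A * A =
      (Matrix.diagonal (fun _ => x) - A) * -(Matrix.diagonal (fun _ => -x) - A)
    have e1 : Matrix.diagonal (fun _ : V => x ^ 2) = (x ^ 2) • (1 : Matrix V V ℝ) :=
      (Matrix.smul_one_eq_diagonal _).symm
    have e2 : Matrix.diagonal (fun _ : V => x) = x • (1 : Matrix V V ℝ) :=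
      (Matrix.smul_one_eq_diagonal _).symm
    have e3 : Matrix.diagonal (fun _ : V => -x) = (-x) • (1 : Matrix V V ℝ) :=
      (Matrix.smul_one_eq_diagonal _).symm
    rw [e1, e2, e3, neg_sub, mul_sub, sub_mul, sub_mul]
    simp only [neg_smul, mul_neg, smul_mul_assoc, mul_smul_comm, one_mul, mul_one, smul_smul]
    rw [pow_two]
    abel
  have hp : (A * A).charpoly = (B * B).charpoly := by
    apply Polynomial.eq_of_infinite_eval_eq
    refine Set.Infinite.mono (s := Set.Ici (0 : ℝ)) ?_ (Set.Ici_infinite 0)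
    intro y hy
    have hy' : Real.sqrt y ^ 2 = y := Real.sq_sqrt hy
    rw [Set.mem_ofPred_eq, ← hy', key, key, h, hc]
  by_cases hV : Nonempty V
  · have hW : Nonempty W := by
      rw [← Fintype.card_pos_iff, ← hc]; exact Fintype.card_pos
    rw [Matrix.trace_eq_neg_charpoly_coeff, Matrix.trace_eq_neg_charpoly_coeff, hp, hc]
  · have hV' : IsEmpty V := not_nonempty_iff.1 hV
    have hW : IsEmpty W := by
      rw [← Fintype.card_eq_zero_iff, ← hc]; exact Fintype.card_eq_zero
    simp [Matrix.trace]

theorem trace_Am {V : Type} [Fintype V] [DecidableEq V] (G : SimpleGraph V) [DecidableRel G.Adj] :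
    (Am G * Am G).trace = 2 * (G.edgeFinset.card : ℝ) := by
  have h : (Am G * Am G).trace = ∑ v, (G.degree v : ℝ) := by
    simp only [Matrix.trace, Matrix.diag_apply]
    refine Finset.sum_congr rfl fun v _ => ?_
    rw [← G.card_neighborFinset_eq_degree, Matrix.mul_apply]
    simp only [Am, Matrix.of_apply]
    rw [Finset.card_eq_sum_ones, SimpleGraph.neighborFinset_eq_filter, Finset.sum_filter]
    push_cast
    refine Finset.sum_congr rfl fun w _ => ?_
    by_cases hvw : G.Adj v w
    · simp [hvw, hvw.symm]
    · simp [hvw]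
  rw [h]
  have := G.sum_degrees_eq_twice_card_edges
  exact_mod_cast this

/-- a graph on 14 vertices is never cospectral with its complement -/
theorem not_self_compl {V : Type} [Fintype V] [DecidableEq V] (G : SimpleGraph V)
    (hc : Fintype.card V = 14) : adjCharPoly G ≠ adjCharPoly Gᶜ := by
  classical
  intro h
  rw [adjCharPoly_eq, adjCharPoly_eq] at h
  have h1 := trace_sq _ _ rfl h
  rw [trace_Am, trace_Am] at h1
  have h2 : G.edgeFinset.card = Gᶜ.edgeFinset.card := by
    have : (2 : ℝ) ≠ 0 := by norm_num
    exact_mod_cast mul_left_cancel₀ this h1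
  have h3 : ∀ v, G.degree v + Gᶜ.degree v = 13 := by
    intro v
    have := G.degree_compl v
    have h4 := G.degree_lt_card_verts v
    rw [hc] at this h4
    omega
  have h5 : ∑ v, (G.degree v + Gᶜ.degree v) = 14 * 13 := by
    simp [h3, hc]
  rw [Finset.sum_add_distrib, G.sum_degrees_eq_twice_card_edges,
    Gᶜ.sum_degrees_eq_twice_card_edges] at h5
  omega

end Cg

namespace Cg

/-! ### cographs split -/

section
variable {V W : Type}

theorem no_p4 {G : SimpleGraph V} (hG : IsCograph G) {y x v z : V} (h1 : G.Adj y x)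
    (h2 : G.Adj x v) (h3 : G.Adj v z) (h4 : ¬ G.Adj y v) (h5 : ¬ G.Adj y z)
    (h6 : ¬ G.Adj x z) : False := by
  have n1 : y ≠ x := h1.ne
  have n2 : x ≠ v := h2.ne
  have n3 : v ≠ z := h3.ne
  have n4 : y ≠ v := by rintro rfl; exact h5 h3
  have n5 : y ≠ z := by rintro rfl; exact h6 h1.symm
  have n6 : x ≠ z := by rintro rfl; exact h5 h1
  apply hG
  have inj : Function.Injective ![y, x, v, z] := by
    intro i j hij
    fin_cases i <;> fin_cases j <;> simp_all
  refine ⟨⟨![y, x, v, z], inj⟩, ?_⟩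
  intro i j
  fin_cases i <;> fin_cases j <;>
    simp [SimpleGraph.pathGraph_adj, h1, h2, h3, h4, h5, h6, h1.symm, h2.symm, h3.symm,
      G.adj_comm v y, G.adj_comm z y, G.adj_comm z x]

theorem cograph_compl {G : SimpleGraph V} (hG : IsCograph G) : IsCograph Gᶜ := by
  rintro ⟨f, hf⟩
  have key : ∀ i j : Fin 4, i ≠ j → (¬ (SimpleGraph.pathGraph 4).Adj i j) → G.Adj (f i) (f j) := by
    intro i j hij hp
    rw [← hf, SimpleGraph.compl_adj] at hp
    by_contra h
    exact hp ⟨fun h' => hij (f.injective h'), h⟩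
  have key2 : ∀ i j : Fin 4, (SimpleGraph.pathGraph 4).Adj i j → ¬ G.Adj (f i) (f j) := by
    intro i j hp
    rw [← hf, SimpleGraph.compl_adj] at hp
    exact hp.2
  refine no_p4 hG (y := f 1) (x := f 3) (v := f 0) (z := f 2) (key _ _ ?_ ?_) (key _ _ ?_ ?_)
    (key _ _ ?_ ?_) (key2 _ _ ?_) (key2 _ _ ?_) (key2 _ _ ?_) <;>
    simp [SimpleGraph.pathGraph_adj]

theorem cograph_emb {G : SimpleGraph V} {H : SimpleGraph W} (e : G ↪g H) (hH : IsCograph H) :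
    IsCograph G := by
  rintro ⟨f, hf⟩
  refine hH ⟨f.trans e.toEmbedding, fun i j => ?_⟩
  rw [← hf]
  exact e.map_adj_iff

theorem cograph_iso {G : SimpleGraph V} {H : SimpleGraph W} (h : Isom G H) (hH : IsCograph H) :
    IsCograph G := h.elim fun e => cograph_emb e.toEmbedding hH

/-- `s` splits into two nonempty parts without edges between them -/
def Sp (G : SimpleGraph V) (s : Set V) : Prop :=
  ∃ A ⊆ s, A.Nonempty ∧ (s \ A).Nonempty ∧ ∀ a ∈ A, ∀ b ∈ s \ A, ¬ G.Adj a b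

theorem sp_aux {G : SimpleGraph V} (hG : IsCograph G) {s : Set V} {v : V} (hv : v ∉ s)
    {A B : Set V} (hAB : A ∪ B = s) (hc : ∀ a ∈ A, ∀ b ∈ B, ¬ G.Adj a b) {u z : V}
    (hu : u ∈ A) (huv : ¬ G.Adj v u) (hz : z ∈ B) (hvz : G.Adj v z) : Sp G (insert v s) := by
  refine ⟨{y | y ∈ A ∧ ¬ G.Adj v y}, ?_, ⟨u, hu, huv⟩, ⟨v, by simp, ?_⟩, ?_⟩
  · rintro y ⟨hy, _⟩
    right; rw [← hAB]; left; exact hy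
  · rintro ⟨h, _⟩
    apply hv; rw [← hAB]; left; exact h
  · rintro y ⟨hy, hvy⟩ x ⟨hx, hx'⟩ hyx
    rcases hx with rfl | hx
    · exact hvy hyx.symm
    · rw [← hAB] at hx
      rcases hx with hx | hx
      · have hvx : G.Adj v x := by
          by_contra h
          exact hx' ⟨hx, h⟩
        exact no_p4 hG hyx hvx.symm hvz (fun h => hvy h.symm) (hc _ hy _ hz) (hc _ hx _ hz)
      · exact hc _ hy _ hx hyx

theorem sp_step {G : SimpleGraph V} (hG : IsCograph G) {s : Set V} {v : V} (hv : v ∉ s)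
    (h : Sp G s) : Sp G (insert v s) ∨ Sp Gᶜ (insert v s) := by
  obtain ⟨A, hA, ⟨a, ha⟩, ⟨b, hb⟩, hc⟩ := h
  by_cases h1 : ∀ a ∈ A, ¬ G.Adj v a
  · left
    refine ⟨A, fun x hx => Or.inr (hA hx), ⟨a, ha⟩, ⟨b, Or.inr hb.1, hb.2⟩, ?_⟩
    rintro x hx y ⟨rfl | hy, hy'⟩ hxy
    · exact h1 x hx hxy.symm
    · exact hc x hx y ⟨hy, hy'⟩ hxy
  by_cases h2 : ∀ b ∈ s \ A, ¬ G.Adj v b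
  · left
    refine ⟨s \ A, fun x hx => Or.inr hx.1, ⟨b, hb⟩, ⟨a, Or.inr (hA ha), fun h => h.2 ha⟩, ?_⟩
    rintro x hx y ⟨rfl | hy, hy'⟩ hxy
    · exact h2 x hx hxy.symm
    · have : y ∈ A := by
        by_contra h
        exact hy' ⟨hy, h⟩
      exact hc y this x hx hxy.symm
  by_cases h3 : ∀ x ∈ s, G.Adj v x
  · right
    refine ⟨{v}, by simp, by simp, ⟨a, Or.inr (hA ha), ?_⟩, ?_⟩
    · rintro rfl
      exact hv (hA ha)
    · rintro x rfl y ⟨hy | hy, hy'⟩ hxy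
      · exact hy' hy
      · exact ((SimpleGraph.compl_adj _ _ _).1 hxy).2 (h3 y hy)
  push Not at h1 h2 h3
  obtain ⟨p, hp, hvp⟩ := h1
  obtain ⟨q, hq, hvq⟩ := h2
  obtain ⟨u, hu, huv⟩ := h3
  left
  by_cases huA : u ∈ A
  · exact sp_aux hG hv (Set.union_sdiff_cancel hA) hc huA huv hq hvq
  · exact sp_aux hG hv (Set.sdiff_union_of_subset hA)
      (fun a ha b hb h => hc b hb a ha h.symm) ⟨hu, huA⟩ huv hp hvp

theorem sp_all {G : SimpleGraph V} (hG : IsCograph G) (s : Finset V) :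
    2 ≤ s.card → Sp G s ∨ Sp Gᶜ s := by
  classical
  induction s using Finset.induction_on with
  | empty => simp
  | insert v s hv ih =>
    intro hs
    rw [Finset.card_insert_of_notMem hv] at hs
    rw [Finset.coe_insert]
    have hv' : v ∉ (s : Set V) := by simpa using hv
    by_cases h2 : 2 ≤ s.card
    · rcases ih h2 with h | h
      · exact sp_step hG hv' h
      · have := sp_step (cograph_compl hG) hv' h
        rw [compl_compl] at this
        exact this.symm
    · have h1 : s.card = 1 := by omega
      obtain ⟨w, rfl⟩ := Finset.card_eq_one.1 h1
      have hvw : v ≠ w := by simpa using hv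
      have key : ∀ K : SimpleGraph V, ¬ K.Adj v w → Sp K (insert v (({w} : Finset V) : Set V)) := by
        intro K hK
        refine ⟨{v}, by simp, by simp, ⟨w, by simp, ?_⟩, ?_⟩
        · intro h; exact hvw h.symm
        · rintro x rfl y ⟨hy | hy, hy'⟩ hxy
          · exact hy' hy
          · have : y = w := by simpa using hy
            subst this
            exact hK hxy
      by_cases h : G.Adj v w
      · right
        exact key _ (fun h' => ((SimpleGraph.compl_adj _ _ _).1 h').2 h)
      · left; exact key _ h

theorem sp_univ [Fintype V] {G : SimpleGraph V} (hG : IsCograph G) (h : 2 ≤ Fintype.card V) :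
    Sp G Set.univ ∨ Sp Gᶜ Set.univ := by
  have := sp_all hG Finset.univ h
  simpa using this

theorem split_isom {G : SimpleGraph V} {A : Set V} (h : ∀ a ∈ A, ∀ b ∉ A, ¬ G.Adj a b) :
    Isom ((G.induce A).sum (G.induce Aᶜ)) G := by
  classical
  refine ⟨⟨Equiv.Set.sumCompl A, ?_⟩⟩
  rintro (⟨x, hx⟩ | ⟨x, hx⟩) (⟨y, hy⟩ | ⟨y, hy⟩)
  · simp
  · simpa using h x hx y hy
  · simpa using fun h' : G.Adj x y => h y hy x hx h'.symm
  · simp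

end

/-! ### decomposition -/

def Dec (n k : ℕ) {V : Type} (G : SimpleGraph V) : Prop :=
  ∃ l : List T, (∀ x ∈ l, It k x) ∧ szL l = n ∧ Isom G (gr (unL l))

theorem dec_split {n : ℕ}
    (ih : ∀ m < n, ∀ (V : Type) [Fintype V] (G : SimpleGraph V), IsCograph G →
      Fintype.card V = m → Dec m m G)
    {V : Type} [Fintype V] {G : SimpleGraph V} (hG : IsCograph G) (hn : Fintype.card V = n)
    (h : Sp G Set.univ) : Dec n (n - 1) G := by
  classical
  obtain ⟨A, -, ⟨a, ha⟩, ⟨b, -, hb⟩, hc⟩ := h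
  have hca : Fintype.card A + Fintype.card (Aᶜ : Set V) = n := by
    rw [← hn, ← Fintype.card_sum]
    exact Fintype.card_congr (Equiv.Set.sumCompl A)
  have h1 : 0 < Fintype.card A := Fintype.card_pos_iff.2 ⟨⟨a, ha⟩⟩
  have h2 : 0 < Fintype.card (Aᶜ : Set V) := Fintype.card_pos_iff.2 ⟨⟨b, hb⟩⟩
  obtain ⟨l, hl, hs, hi⟩ := ih _ (by omega) A (G.induce A)
    (cograph_emb (SimpleGraph.Embedding.induce A) hG) rfl
  obtain ⟨l', hl', hs', hi'⟩ := ih _ (by omega) (Aᶜ : Set V) (G.induce Aᶜ)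
    (cograph_emb (SimpleGraph.Embedding.induce _) hG) rfl
  refine ⟨l ++ l', ?_, ?_, ?_⟩
  · intro x hx
    rcases List.mem_append.1 hx with hx | hx
    · exact (hl x hx).mono (by omega)
    · exact (hl' x hx).mono (by omega)
  · rw [szL_append, hs, hs', hca]
  · refine (split_isom fun a ha b hb => hc a ha b ⟨trivial, hb⟩).symm.trans ?_
    exact (Isom.sum hi hi').trans (isom_unL_append l l').symm

theorem isom_un_zero (a : T) : Isom (gr (.un a .zero)) (gr a) :=
  (isom_comm _ _).trans (isom_zero_un a)

theorem isom_compl_compl {V : Type} (G : SimpleGraph V) : Isom G Gᶜᶜ := by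
  rw [compl_compl]; exact Isom.refl _

theorem decomp (n : ℕ) (hn : n ≤ 13) : ∀ (V : Type) [Fintype V] (G : SimpleGraph V),
    IsCograph G → Fintype.card V = n → Dec n n G := by
  induction n using Nat.strong_induction_on with
  | _ n ih =>
    intro V _ G hG hc
    have ih' : ∀ m < n, ∀ (V : Type) [Fintype V] (G : SimpleGraph V), IsCograph G →
      Fintype.card V = m → Dec m m G := fun m hm => ih m hm (by omega)
    rcases Nat.lt_or_ge n 2 with h2 | h2
    · rcases (by omega : n = 0 ∨ n = 1) with rfl | rfl
      · refine ⟨[], by simp, rfl, ?_⟩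
        have := Fintype.card_eq_zero_iff.1 hc
        exact ⟨⟨(Equiv.equivOfIsEmpty V Empty : V ≃ vt .zero), fun {a} => isEmptyElim a⟩⟩
      · refine ⟨[.one], ?_, rfl, ?_⟩
        · intro x hx
          exact ⟨1, le_rfl, by simpa [connL] using hx⟩
        · refine Isom.trans ?_ (isom_un_zero .one).symm
          have hs : Subsingleton V := Fintype.card_le_one_iff_subsingleton.1 hc.le
          have e : V ≃ vt .one := Fintype.equivOfCardEq (hc.trans (card_vt .one).symm)
          refine ⟨⟨e, ?_⟩⟩
          intro a b
          have hab : a = b := Subsingleton.elim _ _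
          subst hab
          simp
    · rcases sp_univ hG (by omega) with h | h
      · obtain ⟨l, hl, hs, hi⟩ := dec_split ih' hG hc h
        exact ⟨l, fun x hx => (hl x hx).mono (by omega), hs, hi⟩
      · obtain ⟨l, hl, hs, hi⟩ := dec_split ih' (cograph_compl hG) hc h
        obtain ⟨s, hsc, hsi⟩ := connL_cov n h2 hn l hl hs
        refine ⟨[.co s], ?_, ?_, ?_⟩
        · intro x hx
          rw [List.mem_singleton] at hx
          exact ⟨n, le_rfl, hx ▸ hsc⟩
        · have := sle13 n hn _ hsc
          simpa using this
        · refine Isom.trans ?_ (isom_un_zero _).symm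
          exact (isom_compl_compl G).trans (hi.trans hsi).compl

theorem decomp14 {V : Type} [Fintype V] (G : SimpleGraph V) (hG : IsCograph G)
    (hc : Fintype.card V = 14) :
    ∃ s ∈ dl, Isom G (gr s) ∨ Isom Gᶜ (gr s) := by
  have ih' : ∀ m < 14, ∀ (V : Type) [Fintype V] (G : SimpleGraph V), IsCograph G →
      Fintype.card V = m → Dec m m G := fun m hm => decomp m (by omega)
  rcases sp_univ hG (by omega) with h | h
  · obtain ⟨l, hl, hs, hi⟩ := dec_split ih' hG hc h
    obtain ⟨s, hsd, hsi⟩ := dl_cov l hl hs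
    exact ⟨s, hsd, Or.inl (hi.trans hsi)⟩
  · obtain ⟨l, hl, hs, hi⟩ := dec_split ih' (cograph_compl hG) hc h
    obtain ⟨s, hsd, hsi⟩ := dl_cov l hl hs
    exact ⟨s, hsd, Or.inr (hi.trans hsi)⟩

/-! ### cancellation of isolated vertices -/

theorem swap_isom {V : Type} [DecidableEq V] (G : SimpleGraph V) {p q : V}
    (hp : ∀ x, ¬ G.Adj p x) (hq : ∀ x, ¬ G.Adj q x) (a b : V) :
    G.Adj (Equiv.swap p q a) (Equiv.swap p q b) ↔ G.Adj a b := by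
  have hp' : ∀ x, ¬ G.Adj x p := fun x h => hp x h.symm
  have hq' : ∀ x, ¬ G.Adj x q := fun x h => hq x h.symm
  unfold Equiv.swap
  simp only [Equiv.coe_fn_mk, Equiv.swapCore]
  split_ifs <;> simp_all

theorem cancel_one {a b : T} (h : Isom (gr (.un .one a)) (gr (.un .one b))) :
    Isom (gr a) (gr b) := by
  obtain ⟨e⟩ := h
  let K : SimpleGraph (Unit ⊕ vt b) := (⊥ : SimpleGraph Unit).sum (gr b)
  let e1 : Unit ⊕ vt a ≃ Unit ⊕ vt b := e.toEquiv
  have he1 : ∀ x y, K.Adj (e1 x) (e1 y) ↔ ((⊥ : SimpleGraph Unit).sum (gr a)).Adj x y :=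
    fun x y => e.map_adj_iff
  have hp : ∀ x, ¬ K.Adj (Sum.inl ()) x := by
    rintro (x | x) h
    · simp [K] at h
    · simp [K] at h
  have hq : ∀ x, ¬ K.Adj (e1 (Sum.inl ())) x := by
    intro x h
    rw [← e1.apply_symm_apply x, he1] at h
    revert h
    rcases e1.symm x with y | y <;> simp
  let f : Unit ⊕ vt a ≃ Unit ⊕ vt b := e1.trans (Equiv.swap (e1 (Sum.inl ())) (Sum.inl ()))
  have hf : ∀ x y, K.Adj (f x) (f y) ↔ ((⊥ : SimpleGraph Unit).sum (gr a)).Adj x y := by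
    intro x y
    rw [← he1]
    exact swap_isom K hq hp _ _
  have hf0 : f (Sum.inl ()) = Sum.inl () := by simp [f]
  have hg : ∀ v : vt a, ∃ w : vt b, f (Sum.inr v) = Sum.inr w := by
    intro v
    rcases h : f (Sum.inr v) with w | w
    · have h2 : f (Sum.inr v) = f (Sum.inl ()) := by rw [h, hf0]
      exact absurd (f.injective h2) (by simp)
    · exact ⟨w, rfl⟩
  choose g hg using hg
  have hb : Function.Bijective g := by
    constructor
    · intro x y hxy
      have : f (Sum.inr x) = f (Sum.inr y) := by rw [hg, hg, hxy]
      simpa using f.injective this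
    · intro w
      rcases h : f.symm (Sum.inr w) with v | v
      · have h2 : f (Sum.inl v) = Sum.inr w := by rw [← h]; simp
        have h3 : f (Sum.inl ()) = Sum.inr w := h2
        rw [hf0] at h3
        simp at h3
      · refine ⟨v, ?_⟩
        have h2 : f (Sum.inr v) = Sum.inr w := by rw [← h]; simp
        rw [hg] at h2
        simpa using h2
  refine ⟨⟨Equiv.ofBijective g hb, ?_⟩⟩
  intro x y
  have := hf (Sum.inr x) (Sum.inr y)
  rw [hg, hg] at this
  simpa [K] using this

def pad (k : ℕ) (l : List T) : List T := List.replicate k .one ++ l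

theorem cancel_pad (k : ℕ) (l l' : List T) (h : Isom (gr (unL (pad k l))) (gr (unL (pad k l')))) :
    Isom (gr (unL l)) (gr (unL l')) := by
  induction k with
  | zero => exact h
  | succ k ih => exact ih (cancel_one h)

theorem st_pad (k t : ℕ) (l l' : List T) (h : st t (unL l) = st t (unL l')) :
    st t (unL (pad k l)) = st t (unL (pad k l')) := by
  induction k with
  | zero => exact h
  | succ k ih =>
    change (st t .one).un (st t (unL (pad k l))) = (st t .one).un (st t (unL (pad k l')))
    rw [ih]

theorem sz_pad (k : ℕ) (l : List T) : szL (pad k l) = k + szL l := by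
  simp [pad, szL, sz]

theorem st_iso {s s' : T} (t : ℕ) (h : Isom (gr s) (gr s')) (hs : sz s = sz s') (ht : sz s ≤ t) :
    st t s = st t s' :=
  st_of_gen (G := gr s) (H := gr s') s s' t (Isom.refl _) (Isom.refl _) hs ht
    ⟨charpoly_iso h, charpoly_iso h.compl⟩

theorem main_lt {V W : Type} [Fintype V] [DecidableEq V] [Fintype W] [DecidableEq W] (n : ℕ)
    (hn : n ≤ 13) (G : SimpleGraph V) (H : SimpleGraph W) (hV : Fintype.card V = n)
    (hW : Fintype.card W = n) (hG : IsCograph G) (hH : IsCograph H) (h : GenCospectral G H) :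
    Isom G H := by
  obtain ⟨l, hl, hs, hi⟩ := decomp n hn V G hG hV
  obtain ⟨l', hl', hs', hi'⟩ := decomp n hn W H hH hW
  have e := st_of_gen _ _ 17 hi hi' (by rw [sz_unL, sz_unL, hs, hs'])
    (by rw [sz_unL, hs]; omega) h
  have hp : ∀ l : List T, (∀ x ∈ l, It n x) → szL l = n →
      ∃ s ∈ dl, Isom (gr (unL (pad (14 - n) l))) (gr s) := by
    intro l hl hs
    apply dl_cov
    · intro x hx
      rcases List.mem_append.1 hx with hx | hx
      · rw [List.eq_of_mem_replicate hx]
        exact ⟨1, by norm_num, by simp [connL]⟩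
      · exact (hl x hx).mono hn
    · rw [sz_pad, hs]; omega
  obtain ⟨s, hsd, hsi⟩ := hp l hl hs
  obtain ⟨s', hsd', hsi'⟩ := hp l' hl' hs'
  have z1 : sz (unL (pad (14 - n) l)) = 14 := by rw [sz_unL, sz_pad, hs]; omega
  have z2 : sz (unL (pad (14 - n) l')) = 14 := by rw [sz_unL, sz_pad, hs']; omega
  have e1 := st_iso 17 hsi (by rw [z1, dl_sz s hsd]) (by rw [z1]; norm_num)
  have e2 := st_iso 17 hsi' (by rw [z2, dl_sz s' hsd']) (by rw [z2]; norm_num)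
  have e3 : st 17 s = st 17 s' := by rw [← e1, ← e2]; exact st_pad _ _ _ _ e
  have e4 : s = s' := dl_inj s s' hsd hsd' (by unfold hsh; rw [e3])
  subst e4
  exact hi.trans ((cancel_pad _ _ _ (hsi.trans hsi'.symm)).trans hi'.symm)

theorem main_mixed {V W : Type} [Fintype V] [DecidableEq V] [Fintype W] [DecidableEq W]
    (G : SimpleGraph V) (H : SimpleGraph W) (hV : Fintype.card V = 14) {s s' : T} (hs : s ∈ dl)
    (hs' : s' ∈ dl) (hi : Isom G (gr s)) (hi' : Isom Hᶜ (gr s')) (h : GenCospectral G H) :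
    False := by
  have hH : Isom H (gr (.co s')) := (isom_compl_compl H).trans hi'.compl
  have z : sz s = 14 := dl_sz s hs
  have z' : sz s' = 14 := dl_sz s' hs'
  have e := st_of_gen s (.co s') 17 hi hH (by rw [z]; exact z'.symm) (by rw [z]; norm_num) h
  have e4 : s = s' := by
    apply dl_inj s s' hs hs'
    unfold hsh
    rw [e]
    simp only [st, St.co, Nat.add_sub_cancel]
    rw [Nat.xor_comm]
  subst e4
  apply not_self_compl G hV
  rw [h.1]
  refine charpoly_iso ?_
  have : Isom G Hᶜ := hi.trans hi'.symm
  exact (isom_compl_compl H).trans this.compl.symm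

theorem main_eq {V W : Type} [Fintype V] [DecidableEq V] [Fintype W] [DecidableEq W]
    (G : SimpleGraph V) (H : SimpleGraph W) (hV : Fintype.card V = 14)
    (hW : Fintype.card W = 14) (hG : IsCograph G) (hH : IsCograph H) (h : GenCospectral G H) :
    Isom G H := by
  have same : ∀ {V W : Type} [Fintype V] [DecidableEq V] [Fintype W] [DecidableEq W]
      (G : SimpleGraph V) (H : SimpleGraph W) (s s' : T), s ∈ dl → s' ∈ dl → Isom G (gr s) →
      Isom H (gr s') → GenCospectral G H → Isom G H := by
    intro V W _ _ _ _ G H s s' hs hs' hi hi' h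
    have z : sz s = 14 := dl_sz s hs
    have z' : sz s' = 14 := dl_sz s' hs'
    have e := st_of_gen s s' 17 hi hi' (by rw [z, z']) (by rw [z]; norm_num) h
    have e4 : s = s' := dl_inj s s' hs hs' (by unfold hsh; rw [e])
    subst e4
    exact hi.trans hi'.symm
  obtain ⟨s, hs, hi⟩ := decomp14 G hG hV
  obtain ⟨s', hs', hi'⟩ := decomp14 H hH hW
  rcases hi with hi | hi <;> rcases hi' with hi' | hi'
  · exact same G H s s' hs hs' hi hi' h
  · exact (main_mixed G H hV hs hs' hi hi' h).elim
  · exact (main_mixed H G hW hs' hs hi' hi ⟨h.1.symm, h.2.symm⟩).elim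
  · have := same Gᶜ Hᶜ s s' hs hs' hi hi' ⟨h.2, by rw [compl_compl, compl_compl]; exact h.1⟩
    exact (isom_compl_compl G).trans (this.compl.trans (isom_compl_compl H).symm)

end Cg

namespace Cg

/-! ### the pair on fifteen vertices -/

theorem cograph_sum {V W : Type} {G : SimpleGraph V} {H : SimpleGraph W} (hG : IsCograph G)
    (hH : IsCograph H) : IsCograph (G.sum H) := by
  rintro ⟨f, hf⟩
  have h01 := (hf 0 1).2 (by simp [SimpleGraph.pathGraph_adj])
  have h12 := (hf 1 2).2 (by simp [SimpleGraph.pathGraph_adj])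
  have h23 := (hf 2 3).2 (by simp [SimpleGraph.pathGraph_adj])
  have n02 : ¬ (G.sum H).Adj (f 0) (f 2) := by
    rw [hf]; simp [SimpleGraph.pathGraph_adj]
  have n03 : ¬ (G.sum H).Adj (f 0) (f 3) := by
    rw [hf]; simp [SimpleGraph.pathGraph_adj]
  have n13 : ¬ (G.sum H).Adj (f 1) (f 3) := by
    rw [hf]; simp [SimpleGraph.pathGraph_adj]
  revert h01 h12 h23 n02 n03 n13
  generalize f 0 = x0
  generalize f 1 = x1
  generalize f 2 = x2
  generalize f 3 = x3
  intro h01 h12 h23 n02 n03 n13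
  rcases x0 with x0 | x0 <;> rcases x1 with x1 | x1 <;> rcases x2 with x2 | x2 <;>
    rcases x3 with x3 | x3 <;> simp at h01 h12 h23 n02 n03 n13
  · exact no_p4 hG h01 h12 h23 n02 n03 n13
  · exact no_p4 hH h01 h12 h23 n02 n03 n13

theorem cograph_gr (s : T) : IsCograph (gr s) := by
  induction s with
  | zero =>
    rintro ⟨f, -⟩
    exact (f 0 : Empty).elim
  | one =>
    rintro ⟨f, -⟩
    have h : f 0 = f 1 := (rfl : (f 0 : Unit) = f 1)
    exact absurd (f.injective h) (by simp)
  | un l r hl hr => exact cograph_sum hl hr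
  | co s ih => exact cograph_compl ih

def K2 : T := .co (.un .one .one)
def P3 : T := .co (.un K2 .one)
def E4 : T := .un .one (.un .one (.un .one .one))
def T1 : T := .un (.co (.un (.co E4) .one))
  (.co (.un K2 (.co (.un (.co (.un K2 (.un K2 .one))) P3))))
def T2 : T := .un (.co (.un K2 K2))
  (.co (.un .one (.co (.un (.co (.un (.co E4) (.un K2 .one))) P3))))

theorem charpoly_of_st (s s' : T) (h : sz s = 15) (h' : sz s' = 15)
    (hst : ∀ i < 16, (st (15 + i) s).a = (st (15 + i) s').a) :
    adjCharPoly (gr s) = adjCharPoly (gr s') := by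
  have hd : ∀ r : T, sz r = 15 → (adjCharPoly (gr r)).degree < ((Finset.range 16).card : ℕ) := by
    intro r hr
    rw [adjCharPoly_eq, Matrix.charpoly_degree_eq_dim, card_vt, hr, Finset.card_range]
    norm_num
  refine Polynomial.eq_of_degrees_lt_of_eval_index_eq (v := fun i : ℕ => ((15 + i : ℕ) : ℝ))
    (Finset.range 16) ?_ (hd s h) (hd s' h') ?_
  · intro i _ j _ hij
    have hij2 : ((15 + i : ℕ) : ℝ) = ((15 + j : ℕ) : ℝ) := hij
    have : 15 + i = 15 + j := Nat.cast_injective hij2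
    omega
  · intro i hi
    rw [eval_M, eval_M, (gs_tree (15 + i) s (by omega)).m.det,
      (gs_tree (15 + i) s' (by omega)).m.det, hst i (Finset.mem_range.1 hi)]

theorem gen_pair : GenCospectral (gr T1) (gr T2) :=
  ⟨charpoly_of_st T1 T2 rfl rfl (by decide +kernel),
    charpoly_of_st (.co T1) (.co T2) rfl rfl (by decide +kernel)⟩

instance grDec : (s : T) → DecidableRel (gr s).Adj
  | .zero => fun x _ => Empty.elim x
  | .one => fun _ _ => isFalse id
  | .un l r => fun x y =>
    match x, y with
    | .inl x, .inl y => grDec l x y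
    | .inr x, .inr y => grDec r x y
    | .inl _, .inr _ => isFalse (by simp [gr_un])
    | .inr _, .inl _ => isFalse (by simp [gr_un])
  | .co s => fun x y =>
    letI := grDec s x y
    letI := vtDec s x y
    decidable_of_iff (x ≠ y ∧ ¬ (gr s).Adj x y) (SimpleGraph.compl_adj (gr s) x y).symm

/-- there is a leaf -/
def Leaf {V : Type} (G : SimpleGraph V) : Prop := ∃ v w, G.Adj v w ∧ ∀ x, G.Adj v x → x = w

theorem leaf_iso {V W : Type} {G : SimpleGraph V} {H : SimpleGraph W} (h : Isom G H)
    (hG : Leaf G) : Leaf H := by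
  obtain ⟨e⟩ := h
  obtain ⟨v, w, h1, h2⟩ := hG
  refine ⟨e v, e w, e.map_adj_iff.2 h1, fun x hx => ?_⟩
  rw [← e.apply_symm_apply x] at hx ⊢
  rw [h2 _ (e.map_adj_iff.1 hx)]

theorem leaf1 : Leaf (gr T1) := by unfold Leaf; decide +kernel
theorem leaf2 : ¬ Leaf (gr T2) := by unfold Leaf; decide +kernel

theorem pair15 : ∃ G H : SimpleGraph (Fin 15),
    IsCograph G ∧ IsCograph H ∧ GenCospectral G H ∧ ¬ Nonempty (G ≃g H) := by
  have key : ∀ s : T, sz s = 15 → ∃ G : SimpleGraph (Fin 15), Isom G (gr s) := by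
    intro s hs
    have e : Fin 15 ≃ vt s :=
      (Fintype.equivFinOfCardEq ((card_vt s).trans hs)).symm
    exact ⟨(gr s).comap e, ⟨SimpleGraph.Iso.comap e (gr s)⟩⟩
  obtain ⟨G, hG⟩ := key T1 rfl
  obtain ⟨H, hH⟩ := key T2 rfl
  refine ⟨G, H, cograph_iso hG (cograph_gr _), cograph_iso hH (cograph_gr _), ⟨?_, ?_⟩, ?_⟩
  · exact (charpoly_iso hG).trans (gen_pair.1.trans (charpoly_iso hH).symm)
  · exact (charpoly_iso hG.compl).trans (gen_pair.2.trans (charpoly_iso hH.compl).symm)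
  · intro h
    have h' : Isom G H := h
    exact leaf2 (leaf_iso hH (leaf_iso h' (leaf_iso hG.symm leaf1)))

theorem final_thm : (∃ G H : SimpleGraph (Fin 15),
        IsCograph G ∧ IsCograph H ∧ GenCospectral G H ∧ ¬ Nonempty (G ≃g H)) ∧
      ∀ n < 15, ∀ G H : SimpleGraph (Fin n),
        IsCograph G → IsCograph H → GenCospectral G H → Nonempty (G ≃g H) := by
  refine ⟨pair15, fun n hn G H hG hH h => ?_⟩
  rcases Nat.lt_or_ge n 14 with h14 | h14
  · exact main_lt n (by omega) G H (by simp) (by simp) hG hH h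
  · have : n = 14 := by omega
    subst this
    exact main_eq G H (by simp) (by simp) hG hH h

end Cg

/-- There is a pair of non-isomorphic generalized cospectral cographs on `15` vertices,
and `15` is minimal: on fewer vertices, generalized cospectral cographs are isomorphic. -/
theorem minimal_generalized_cospectral_cograph_pair_has_fifteen_vertices :
    (∃ G H : SimpleGraph (Fin 15),
        IsCograph G ∧ IsCograph H ∧ GenCospectral G H ∧ ¬ Nonempty (G ≃g H)) ∧
      ∀ n < 15, ∀ G H : SimpleGraph (Fin n),
        IsCograph G → IsCograph H → GenCospectral G H → Nonempty (G ≃g H) := by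
  exact Cg.final_thm
end

section
/- (Carvalho et al.) For each n ≥ 4, at least 1/8 of the threshold graphs of order n have a Q-cospectral mate. Precisely, letting t(n) denote the number of isomorphism classes of threshold graphs on n vertices and t*(n) denote the number of isomorphism classes of threshold graphs G on n vertices for which there exists a graph H on n vertices that is Q-cospectral with G but not isomorphic to G, one has t*(n) ≥ t(n)/8 for all n ≥ 4. -/
open SimpleGraph

/-- A threshold graph: it can be built from a single vertex by repeatedly adding either an
isolated vertex or a dominating vertex. Equivalently, there is an ordering
`σ 0, σ 1, …, σ (n-1)` of the vertices such that each vertex is isolated or dominating in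
the subgraph induced on it and the earlier vertices. -/
def IsThreshold {n : ℕ} (G : SimpleGraph (Fin n)) : Prop :=
  1 ≤ n ∧ ∃ σ : Equiv.Perm (Fin n), ∀ i : Fin n,
    (∀ j < i, ¬ G.Adj (σ i) (σ j)) ∨ (∀ j < i, G.Adj (σ i) (σ j))

/-- The characteristic polynomial (over `ℝ`) of the signless Laplacian matrix
`Q(G) = D(G) + A(G)` of a finite graph. -/
noncomputable def qCharPoly {V : Type} [Fintype V] [DecidableEq V] (G : SimpleGraph V) :
    Polynomial ℝ :=
  letI := Classical.decRel G.Adj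
  Matrix.charpoly (G.degMatrix ℝ + G.adjMatrix ℝ)

/-- Two finite graphs are `Q`-cospectral if their signless Laplacian matrices have the same
characteristic polynomial. -/
def QCospectral {V W : Type} [Fintype V] [DecidableEq V] [Fintype W] [DecidableEq W]
    (G : SimpleGraph V) (H : SimpleGraph W) : Prop :=
  qCharPoly G = qCharPoly H

/-- Generalized `Q`-cospectrality: the graphs are `Q`-cospectral and so are their
complements. -/
def GenQCospectral {V W : Type} [Fintype V] [DecidableEq V] [Fintype W] [DecidableEq W]
    (G : SimpleGraph V) (H : SimpleGraph W) : Prop :=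
  QCospectral G H ∧ QCospectral Gᶜ Hᶜ

/-- The threshold graph with creation sequence `s`. -/
def thr (s : ℕ → Bool) (n : ℕ) : SimpleGraph (Fin n) where
  Adj i j := i ≠ j ∧ s (max i.val j.val) = true
  symm := ⟨fun i j h => ⟨h.1.symm, by rw [max_comm]; exact h.2⟩⟩
  loopless := ⟨fun i h => h.1 rfl⟩

theorem thr_adj (s : ℕ → Bool) (n : ℕ) (i j : Fin n) :
    (thr s n).Adj i j ↔ i ≠ j ∧ s (max i.val j.val) = true := Iff.rfl

theorem thr_isThreshold (s : ℕ → Bool) (n : ℕ) (hn : 1 ≤ n) : IsThreshold (thr s n) := by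
  refine ⟨hn, 1, fun i => ?_⟩
  have key : ∀ j < i, max i.val j.val = i.val := fun j hj => by
    have : j.val < i.val := hj
    omega
  cases h : s i.val with
  | false =>
    left
    intro j hj hadj
    have h2 := hadj.2
    simp only [Equiv.Perm.coe_one, id] at h2
    rw [key j hj, h] at h2
    exact absurd h2 (by simp)
  | true =>
    right
    intro j hj
    refine ⟨ne_of_gt hj, ?_⟩
    simp only [Equiv.Perm.coe_one, id]
    rw [key j hj, h]

theorem exists_thr {n : ℕ} (G : SimpleGraph (Fin n)) (hG : IsThreshold G) :
    ∃ s : ℕ → Bool, ∀ t : ℕ → Bool, (∀ i, 1 ≤ i → i < n → s i = t i) →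
      Nonempty (thr t n ≃g G) := by
  classical
  obtain ⟨-, σ, hσ⟩ := hG
  refine ⟨fun i => if h : i < n then decide (∀ j < (⟨i, h⟩ : Fin n), G.Adj (σ ⟨i, h⟩) (σ j))
    else false, fun t ht => ⟨⟨σ, ?_⟩⟩⟩
  have key : ∀ i j : Fin n, j < i → (G.Adj (σ i) (σ j) ↔ t i.val = true) := by
    intro i j hji
    have h1 : 1 ≤ i.val := by
      have : j.val < i.val := hji
      omega
    rw [← ht i.val h1 i.isLt]
    simp only [i.isLt, dif_pos, decide_eq_true_eq]
    constructor
    · intro h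
      rcases hσ i with h' | h'
      · exact absurd h (h' j hji)
      · exact h'
    · intro h
      exact h j hji
  intro i j
  rw [thr_adj]
  rcases lt_trichotomy i j with h | h | h
  · have hv : i.val < j.val := h
    rw [max_eq_right hv.le, G.adj_comm]
    refine (key j i h).trans ⟨fun h' => ⟨h.ne, h'⟩, fun h' => h'.2⟩
  · subst h
    simp
  · have hv : j.val < i.val := h
    rw [max_eq_left hv.le]
    refine (key i j h).trans ⟨fun h' => ⟨h.ne', h'⟩, fun h' => h'.2⟩

theorem thr_adj_castSucc (s : ℕ → Bool) (n : ℕ) (i j : Fin n) :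
    (thr s (n+1)).Adj i.castSucc j.castSucc ↔ (thr s n).Adj i j := by
  simp [thr_adj]

theorem thr_adj_last (s : ℕ → Bool) (n : ℕ) (i : Fin (n+1)) :
    (thr s (n+1)).Adj i (Fin.last n) ↔ i ≠ Fin.last n ∧ s n = true := by
  rw [thr_adj]
  have : max i.val (Fin.last n).val = n := by
    have := i.isLt
    simp only [Fin.val_last]; omega
  rw [this]

theorem thr_last_adj (s : ℕ → Bool) (n : ℕ) (i : Fin (n+1)) :
    (thr s (n+1)).Adj (Fin.last n) i ↔ i ≠ Fin.last n ∧ s n = true := by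
  rw [SimpleGraph.adj_comm, thr_adj_last]

theorem thr_last_eq (s t : ℕ → Bool) (n : ℕ) (e : thr s (n+2) ≃g thr t (n+2)) :
    s (n+1) = true → t (n+1) = true := by
  intro hs
  by_contra ht
  -- the preimage of the last vertex is isolated
  have iso : ∀ i, ¬ (thr s (n+2)).Adj i (e.symm (Fin.last (n+1))) := by
    intro i hi
    have := e.map_adj_iff.mpr hi
    rw [e.apply_symm_apply, thr_adj_last] at this
    exact ht this.2
  have hl := iso (Fin.last (n+1))
  rw [thr_last_adj] at hl
  have hel : e.symm (Fin.last (n+1)) = Fin.last (n+1) := by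
    by_contra hne
    exact hl ⟨hne, hs⟩
  have h0 := iso 0
  rw [hel, thr_adj_last] at h0
  exact h0 ⟨by simp [Fin.ext_iff], hs⟩

theorem thr_iso_restrict (s t : ℕ → Bool) (n : ℕ) (hst : s n = t n)
    (e : thr s (n+1) ≃g thr t (n+1)) : Nonempty (thr s n ≃g thr t n) := by
  let E : Option (Fin n) ≃ Option (Fin n) :=
    (finSuccEquivLast.symm.trans e.toEquiv).trans finSuccEquivLast
  let f := Equiv.removeNone E
  have hf : ∀ i : Fin n, (e i.castSucc ≠ Fin.last n ∧ (f i).castSucc = e i.castSucc) ∨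
      (e i.castSucc = Fin.last n ∧ (f i).castSucc = e (Fin.last n)) := by
    intro i
    have hEi : E (some i) = finSuccEquivLast (e i.castSucc) := by simp [E]
    have hEn : E none = finSuccEquivLast (e (Fin.last n)) := by simp [E]
    by_cases h : e i.castSucc = Fin.last n
    · right
      refine ⟨h, ?_⟩
      have h1 : E (some i) = none := by rw [hEi, h]; simp
      have h2 := Equiv.removeNone_none E h1
      rw [hEn] at h2
      have := congrArg finSuccEquivLast.symm h2
      simpa [f] using this
    · left
      refine ⟨h, ?_⟩
      have h1 : ∃ x, E (some i) = some x := by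
        rw [← Option.ne_none_iff_exists']
        rw [hEi]
        intro h3
        apply h
        apply finSuccEquivLast.injective
        rw [h3]; simp
      have h2 := Equiv.removeNone_some E h1
      rw [hEi] at h2
      have := congrArg finSuccEquivLast.symm h2
      simpa [f] using this
  refine ⟨⟨f, ?_⟩⟩
  intro i j
  by_cases hij : i = j
  · subst hij; simp
  have hij' : i.castSucc ≠ j.castSucc := fun h => hij (Fin.castSucc_injective n h)
  have hfe : ∀ {a b}, (thr t (n+1)).Adj (e a) (e b) ↔ (thr s (n+1)).Adj a b :=
    e.map_adj_iff
  have hil : i.castSucc ≠ Fin.last n := (Fin.castSucc_lt_last i).ne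
  have hjl : j.castSucc ≠ Fin.last n := (Fin.castSucc_lt_last j).ne
  rw [← thr_adj_castSucc t, ← thr_adj_castSucc s]
  rcases hf i with ⟨hi, hi'⟩ | ⟨hi, hi'⟩ <;> rcases hf j with ⟨hj, hj'⟩ | ⟨hj, hj'⟩
  · rw [hi', hj', hfe]
  · rw [hi', hj', hfe, ← hfe (a := i.castSucc) (b := j.castSucc), hj, thr_adj_last, thr_adj_last,
      hst]
    tauto
  · rw [hi', hj', hfe, ← hfe (a := i.castSucc) (b := j.castSucc), hi, thr_last_adj, thr_last_adj,
      hst]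
    tauto
  · exact absurd (e.injective (hi.trans hj.symm)) hij'

theorem thr_iso_inj (s t : ℕ → Bool) (n : ℕ) (e : Nonempty (thr s n ≃g thr t n)) :
    ∀ i, 1 ≤ i → i < n → s i = t i := by
  induction n with
  | zero => intro i _ h; omega
  | succ n ih =>
    intro i h1 hi
    obtain ⟨e⟩ := e
    have hl : s n = t n := by
      cases n with
      | zero => omega
      | succ n =>
        have a := thr_last_eq s t n e
        have b := thr_last_eq t s n e.symm
        exact Bool.eq_iff_iff.mpr ⟨a, b⟩
    rcases Nat.lt_succ_iff_lt_or_eq.mp hi with h | h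
    · exact ih (thr_iso_restrict s t n hl e) i h1 h
    · rw [h, hl]

/-- Adjacency entries of the threshold graph. -/
noncomputable def ent (s : ℕ → Bool) (i j : ℕ) : ℝ :=
  if i ≠ j ∧ s (max i j) = true then 1 else 0

/-- Signless Laplacian of the threshold graph. -/
noncomputable def qm (s : ℕ → Bool) (n : ℕ) : Matrix (Fin n) (Fin n) ℝ :=
  Matrix.of fun i j => if i = j then ∑ k : Fin n, ent s i.val k.val else ent s i.val j.val

theorem qCharPoly_thr (s : ℕ → Bool) (n : ℕ) : qCharPoly (thr s n) = (qm s n).charpoly := by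
  classical
  unfold qCharPoly
  congr 1
  ext i j
  simp only [qm, Matrix.add_apply, Matrix.of_apply, SimpleGraph.degMatrix,
    SimpleGraph.adjMatrix_apply, Matrix.diagonal_apply]
  by_cases h : i = j
  · subst h
    simp only [if_true, SimpleGraph.irrefl, if_false, add_zero]
    rw [← SimpleGraph.card_neighborFinset_eq_degree, SimpleGraph.neighborFinset_eq_filter,
      Finset.card_filter]
    push_cast
    refine Finset.sum_congr rfl fun k _ => ?_
    simp [ent, thr_adj, Fin.ext_iff]
  · have h' : i.val ≠ j.val := fun h2 => h (Fin.ext h2)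
    simp [h, h', ent, thr_adj]

/-- `x I - Q + c J`. -/
noncomputable def bm (s : ℕ → Bool) (n : ℕ) (x c : ℝ) : Matrix (Fin n) (Fin n) ℝ :=
  Matrix.of fun i j => (if i = j then x else 0) - qm s n i j + c

theorem det_block_aux {n : ℕ} (A B : Matrix (Fin n) (Fin n) ℝ)
    (h : ∀ c : ℝ, (A + Matrix.of fun _ _ => c).det = (B + Matrix.of fun _ _ => c).det)
    (b d : ℝ) :
    (Matrix.fromBlocks A (Matrix.of fun _ _ => b) (Matrix.of fun _ _ => b)
      (Matrix.of fun (_ _ : Fin 1) => d)).det =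
    (Matrix.fromBlocks B (Matrix.of fun _ _ => b) (Matrix.of fun _ _ => b)
      (Matrix.of fun (_ _ : Fin 1) => d)).det := by
  have key : ∀ M : Matrix (Fin n) (Fin n) ℝ, ∀ d : ℝ, d ≠ 0 →
      (Matrix.fromBlocks M (Matrix.of fun _ _ => b) (Matrix.of fun _ _ => b)
      (Matrix.of fun (_ _ : Fin 1) => d)).det =
      d * (M + Matrix.of fun _ _ => -(b * d⁻¹ * b)).det := by
    intro M d hd
    have hinv : (Matrix.of fun (_ _ : Fin 1) => d) * (Matrix.of fun (_ _ : Fin 1) => d⁻¹) = 1 := by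
      ext i j
      fin_cases i; fin_cases j
      simp [Matrix.mul_apply, hd]
    have hinv' : (Matrix.of fun (_ _ : Fin 1) => d⁻¹) * (Matrix.of fun (_ _ : Fin 1) => d) = 1 := by
      ext i j
      fin_cases i; fin_cases j
      simp [Matrix.mul_apply, hd]
    let _ : Invertible (Matrix.of fun (_ _ : Fin 1) => d) := ⟨_, hinv', hinv⟩
    rw [Matrix.det_fromBlocks₂₂]
    congr 1
    · simp
    · congr 1
      ext i j
      have : ⅟(Matrix.of fun (_ _ : Fin 1) => d) = (Matrix.of fun (_ _ : Fin 1) => d⁻¹) := rfl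
      rw [this]
      simp [Matrix.mul_apply, sub_eq_add_neg]
  have cont : ∀ M : Matrix (Fin n) (Fin n) ℝ, Continuous fun d : ℝ =>
      (Matrix.fromBlocks M (Matrix.of fun _ _ => b) (Matrix.of fun _ _ => b)
      (Matrix.of fun (_ _ : Fin 1) => d)).det := by
    intro M
    refine Continuous.matrix_det (Continuous.matrix_fromBlocks continuous_const continuous_const
      continuous_const ?_)
    exact continuous_pi fun _ => continuous_pi fun _ => continuous_id
  have := Continuous.ext_on (dense_compl_singleton (0 : ℝ)) (cont A) (cont B)
    (fun d hd => by
      have hd : d ≠ 0 := hd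
      rw [key A d hd, key B d hd, h])
  exact congrFun this d

theorem ent_last (s : ℕ → Bool) (n i : ℕ) (hi : i < n) : ent s i n = if s n then 1 else 0 := by
  simp [ent, hi.ne, max_eq_right hi.le]

theorem last_ent (s : ℕ → Bool) (n i : ℕ) (hi : i < n) : ent s n i = if s n then 1 else 0 := by
  simp [ent, hi.ne', max_eq_left hi.le]

theorem bm_succ (s : ℕ → Bool) (n : ℕ) (x c : ℝ) :
    (bm s (n+1) x c).det = (Matrix.fromBlocks (bm s n (x - if s n then 1 else 0) c)
      (Matrix.of fun _ _ => c - if s n then 1 else 0)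
      (Matrix.of fun _ _ => c - if s n then 1 else 0)
      (Matrix.of fun (_ _ : Fin 1) => x - n * (if s n then 1 else 0) + c)).det := by
  rw [← Matrix.det_submatrix_equiv_self (finSumFinEquiv (m := n) (n := 1))]
  congr 1
  ext i j
  rcases i with i | i <;> rcases j with j | j
  · simp only [bm, qm, Matrix.submatrix_apply, finSumFinEquiv_apply_left, Matrix.of_apply,
      Matrix.fromBlocks_apply₁₁, Fin.sum_univ_castSucc, Fin.val_castAdd, Fin.val_castSucc,
      Fin.val_last, ent_last s n i i.isLt, Fin.castAdd_inj]
    split_ifs <;> ring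
  · have hij : Fin.castAdd 1 i ≠ Fin.natAdd n j := by
      have := i.isLt
      simp only [ne_eq, Fin.ext_iff, Fin.val_castAdd, Fin.val_natAdd]; omega
    have hj : j.val = 0 := by omega
    simp only [bm, qm, Matrix.submatrix_apply, finSumFinEquiv_apply_left,
      finSumFinEquiv_apply_right, Matrix.of_apply, hij, if_false,
      Matrix.fromBlocks_apply₁₂, Fin.val_castAdd, Fin.val_natAdd, hj, add_zero,
      ent_last s n i i.isLt]
    ring
  · have hij : Fin.natAdd n i ≠ Fin.castAdd 1 j := by
      have := j.isLt
      simp only [ne_eq, Fin.ext_iff, Fin.val_castAdd, Fin.val_natAdd]; omega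
    have hj : i.val = 0 := by omega
    simp only [bm, qm, Matrix.submatrix_apply, finSumFinEquiv_apply_left,
      finSumFinEquiv_apply_right, Matrix.of_apply, hij, if_false,
      Matrix.fromBlocks_apply₂₁, Fin.val_castAdd, Fin.val_natAdd, hj, add_zero,
      last_ent s n j j.isLt]
    ring
  · have hij : i = j := Subsingleton.elim _ _
    subst hij
    have hj : i.val = 0 := by omega
    have hself : ent s n n = 0 := by simp [ent]
    have hsum : ∑ k : Fin n, ent s n k.val = n * (if s n then 1 else 0) := by
      rw [Finset.sum_congr rfl (fun k _ => last_ent s n k.val k.isLt)]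
      simp
    simp only [bm, qm, Matrix.submatrix_apply,
      finSumFinEquiv_apply_right, Matrix.of_apply, if_true,
      Matrix.fromBlocks_apply₂₂, Fin.sum_univ_castSucc, Fin.val_natAdd, hj, add_zero,
      Fin.val_castSucc, Fin.val_last, hself, hsum]

theorem bm_add (s : ℕ → Bool) (n : ℕ) (x c c' : ℝ) :
    (bm s n x c + Matrix.of fun _ _ => c') = bm s n x (c + c') := by
  ext i j
  simp [bm, add_assoc]

theorem bm_det_step (s t : ℕ → Bool) (k : ℕ)
    (h0 : ∀ x c, (bm s k x c).det = (bm t k x c).det)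
    (n : ℕ) (hn : k ≤ n) (hst : ∀ i, k ≤ i → s i = t i) :
    ∀ x c, (bm s n x c).det = (bm t n x c).det := by
  induction n, hn using Nat.le_induction with
  | base => exact h0
  | succ n hn ih =>
    intro x c
    rw [bm_succ, bm_succ, hst n hn]
    apply det_block_aux
    intro c'
    rw [bm_add, bm_add, ih]

theorem charpoly_eq_of_bm (s t : ℕ → Bool) (n : ℕ)
    (h : ∀ x c, (bm s n x c).det = (bm t n x c).det) :
    (qm s n).charpoly = (qm t n).charpoly := by
  have key : ∀ (s : ℕ → Bool) (x : ℝ), (qm s n).charpoly.eval x = (bm s n x 0).det := by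
    intro s x
    rw [Matrix.eval_charpoly]
    congr 1
    ext i j
    simp [bm, Matrix.scalar_apply, Matrix.diagonal_apply]
  apply Polynomial.funext
  intro x
  rw [key, key, h]

/-- Prefix `p` of length four, followed by `s`. -/
def creSeq (p : ℕ → Bool) {m : ℕ} (s : Fin m → Bool) (i : ℕ) : Bool :=
  if i < 4 then p i else if h : i - 4 < m then s ⟨i - 4, h⟩ else false

/-- Prefix of the star `K_{1,3}`. -/
def pStar (i : ℕ) : Bool := i == 3

/-- Prefix of `K_3 ∪ K_1`. -/
def pTri (i : ℕ) : Bool := i == 1 || i == 2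

theorem bm_star (s : ℕ → Bool) (a1 : s 1 = false) (a2 : s 2 = false) (a3 : s 3 = true)
    (x c : ℝ) : bm s 4 x c = !![x - 1 + c, c, c, c - 1; c, x - 1 + c, c, c - 1;
      c, c, x - 1 + c, c - 1; c - 1, c - 1, c - 1, x - 3 + c] := by
  ext i j
  simp only [bm, qm, Fin.sum_univ_four, Matrix.of_apply]
  fin_cases i <;> fin_cases j <;> simp [ent, a1, a2, a3] <;> ring

theorem bm_tri (s : ℕ → Bool) (b1 : s 1 = true) (b2 : s 2 = true) (b3 : s 3 = false)
    (x c : ℝ) : bm s 4 x c = !![x - 2 + c, c - 1, c - 1, c; c - 1, x - 2 + c, c - 1, c;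
      c - 1, c - 1, x - 2 + c, c; c, c, c, x + c] := by
  ext i j
  simp only [bm, qm, Fin.sum_univ_four, Matrix.of_apply]
  fin_cases i <;> fin_cases j <;> simp [ent, b1, b2, b3] <;> ring

theorem base_det {m : ℕ} (s : Fin m → Bool) (x c : ℝ) :
    (bm (creSeq pStar s) 4 x c).det = (bm (creSeq pTri s) 4 x c).det := by
  rw [bm_star _ (by simp [creSeq, pStar]) (by simp [creSeq, pStar]) (by simp [creSeq, pStar]),
    bm_tri _ (by simp [creSeq, pTri]) (by simp [creSeq, pTri]) (by simp [creSeq, pTri])]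
  simp [Matrix.det_succ_row_zero, Fin.sum_univ_succ, Fin.succAbove]
  ring

theorem sq_cospectral {m : ℕ} (s : Fin m → Bool) :
    QCospectral (thr (creSeq pStar s) (m+4)) (thr (creSeq pTri s) (m+4)) := by
  unfold QCospectral
  rw [qCharPoly_thr, qCharPoly_thr]
  apply charpoly_eq_of_bm
  refine bm_det_step _ _ 4 (base_det s) (m+4) (by omega) ?_
  intro i hi
  simp [creSeq, Nat.not_lt.mpr hi]

theorem classCount_le (m : ℕ) : classCount (m+4) (fun G => IsThreshold G) ≤ 2^(m+3) := by
  have hc : Nat.card (Fin (m+3) → Bool) = 2^(m+3) := by simp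
  rw [← hc]
  unfold classCount
  let ext : (Fin (m+3) → Bool) → ℕ → Bool := fun s i =>
    if h : i - 1 < m + 3 then s ⟨i-1, h⟩ else false
  refine Nat.card_le_card_of_surjective (fun s => Quot.mk _
    ⟨thr (ext s) (m+4), thr_isThreshold _ _ (by omega)⟩) ?_
  intro q
  induction q using Quot.ind with
  | mk G =>
    obtain ⟨s, hs⟩ := exists_thr G.1 G.2
    refine ⟨fun i => s (i.val + 1), Quot.sound (hs _ ?_)⟩
    intro i h1 h2
    have : i - 1 < m + 3 := by omega
    simp only [ext, this, dif_pos]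
    congr 1
    omega

theorem le_classCount (m : ℕ) : 2^m ≤ classCount (m+4) (fun G => IsThreshold G ∧
        ∃ H : SimpleGraph (Fin (m+4)), QCospectral G H ∧ ¬ Nonempty (G ≃g H)) := by
  have hc : Nat.card (Fin m → Bool) = 2^m := by simp
  rw [← hc]
  unfold classCount
  refine Nat.card_le_card_of_injective (fun s => Quot.mk _
    ⟨thr (creSeq pStar s) (m+4), thr_isThreshold _ _ (by omega),
      thr (creSeq pTri s) (m+4), sq_cospectral s, ?_⟩) ?_
  · intro h
    have := thr_iso_inj _ _ _ h 1 le_rfl (by omega)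
    simp [creSeq, pStar, pTri] at this
  · intro s s' h
    have h' := Quot.eqvGen_exact h
    rw [Equivalence.eqvGen_iff] at h'
    · have := thr_iso_inj _ _ _ h'
      funext i
      have hi := this (i.val + 4) (by omega) (by omega)
      simpa [creSeq] using hi
    · exact ⟨fun G => ⟨RelIso.refl _⟩, fun ⟨e⟩ => ⟨e.symm⟩, fun ⟨e⟩ ⟨f⟩ => ⟨e.trans f⟩⟩

/-- **Carvalho et al.** For each `n ≥ 4`, at least `1/8` of the (isomorphism classes of)
threshold graphs of order `n` have a `Q`-cospectral mate. -/
theorem threshold_qCospectral_mate_proportion {n : ℕ} (hn : 4 ≤ n) :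
    (classCount n (fun G => IsThreshold G) : ℝ) / 8 ≤
      (classCount n (fun G => IsThreshold G ∧
        ∃ H : SimpleGraph (Fin n), QCospectral G H ∧ ¬ Nonempty (G ≃g H)) : ℝ) := by
  obtain ⟨m, rfl⟩ := Nat.exists_eq_add_of_le' hn
  have h1 : (classCount (m+4) (fun G => IsThreshold G) : ℝ) ≤ 2^(m+3) := by
    exact_mod_cast classCount_le m
  have h2 := le_classCount m
  have h3 : ((2^m : ℕ) : ℝ) ≤ _ := Nat.cast_le.mpr h2
  push_cast at h3
  have h4 : (2:ℝ)^(m+3) = 8 * 2^m := by ring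
  linarith
end
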